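/- For every k ≥ 2, a tuple (x_1,…,x_k) ∈ X^k not lying in the diagonal Δ_k(X) = {(x,…,x) : x ∈ X} is a μ-IE-tuple if and only if it is a μ-entropy tuple. -/

import Mathlib

open MeasureTheory Set
open scoped Classical ENNReal

/-- `F` is a nonempty `(K,δ)`-invariant finite subset of the group `G`. -/
def FolnerInv {G : Type*} [Group G] (K : Finset G) (δ : ℝ) (F : Finset G) : Prop :=
  F.Nonempty ∧
    (1 - δ) * (F.card : ℝ) ≤ (((F : Set G)) ∩ {s : G | ∀ g ∈ K, g * s ∈ F}).ncard

/-- The Følner characterisation of amenability for a discrete group `G`. -/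
def FolnerAmenable (G : Type*) [Group G] : Prop :=
  ∀ (K : Finset G) (δ : ℝ), 0 < δ → ∃ F : Finset G, FolnerInv K δ F

/-- The limit supremum of `ψ F / |F|` as `F` becomes more and more invariant. -/
noncomputable def invLimsup {G : Type*} [Group G] (ψ : Finset G → ℝ) : ℝ :=
  ⨅ (K : Finset G) (δ : {d : ℝ // 0 < d}),
    sSup ((fun F : Finset G => ψ F / (F.card : ℝ)) '' {F : Finset G | FolnerInv K δ.1 F})

/-- The limit infimum of `ψ F / |F|` as `F` becomes more and more invariant. -/
noncomputable def invLiminf {G : Type*} [Group G] (ψ : Finset G → ℝ) : ℝ :=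
  ⨆ (K : Finset G) (δ : {d : ℝ // 0 < d}),
    sInf ((fun F : Finset G => ψ F / (F.card : ℝ)) '' {F : Finset G | FolnerInv K δ.1 F})

/-- `J ⊆ G` is an independence set for the tuple `A` of subsets of `X` relative to the
map `D : G → Set X`. -/
def IndepRel {G X : Type*} [Group G] [MulAction G X] {k : ℕ} (A : Fin k → Set X)
    (D : G → Set X) (J : Set G) : Prop :=
  ∀ F : Finset G, (F : Set G) ⊆ J → F.Nonempty → ∀ σ : G → Fin k,
    (⋂ s ∈ F, (D s ∩ (fun x => s • x) ⁻¹' A (σ s))).Nonempty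

/-- `J ⊆ G` is an independence set for the tuple `A` relative to the subset `D ⊆ X`. -/
def IndepSet {G X : Type*} [Group G] [MulAction G X] {k : ℕ} (A : Fin k → Set X)
    (D : Set X) (J : Set G) : Prop :=
  IndepRel A (fun _ => D) J

/-- The maximum of `|F ∩ J|` over independence sets `J` for `A` relative to `D`. -/
noncomputable def maxIndep {G X : Type*} [Group G] [MulAction G X] {k : ℕ}
    (A : Fin k → Set X) (D : G → Set X) (F : Finset G) : ℕ :=
  sSup {m : ℕ | ∃ J : Set G, IndepRel A D J ∧ m = (((F : Set G)) ∩ J).ncard}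

/-- `φ_{A,δ}(F)`: the minimum over Borel sets `D` with `μ(D) ≥ 1 - δ` of the maximum
of `|F ∩ J|` over independence sets `J` for `A` relative to `D`. -/
noncomputable def phiConst {G X : Type*} [Group G] [MulAction G X] [MeasurableSpace X]
    (μ : Measure X) {k : ℕ} (A : Fin k → Set X) (δ : ℝ) (F : Finset G) : ℕ :=
  sInf {m : ℕ | ∃ D : Set X, MeasurableSet D ∧ 1 - δ ≤ (μ D).toReal ∧
    m = maxIndep A (fun _ : G => D) F}

/-- `φ'_{A,δ}(F)`: as `phiConst` but with maps `D : G → Set X` with `μ(D s) ≥ 1 - δ`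
for all `s`. -/
noncomputable def phiMap {G X : Type*} [Group G] [MulAction G X] [MeasurableSpace X]
    (μ : Measure X) {k : ℕ} (A : Fin k → Set X) (δ : ℝ) (F : Finset G) : ℕ :=
  sInf {m : ℕ | ∃ D : G → Set X, (∀ s, MeasurableSet (D s)) ∧
    (∀ s, 1 - δ ≤ (μ (D s)).toReal) ∧ m = maxIndep A D F}

/-- The upper `μ`-independence density `Ī_μ(A)` of the tuple `A`. -/
noncomputable def upperIndepDens (G : Type*) {X : Type*} [Group G] [MulAction G X]
    [MeasurableSpace X] (μ : Measure X) {k : ℕ} (A : Fin k → Set X) : ℝ :=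
  ⨆ δ : {d : ℝ // 0 < d}, invLimsup (fun F : Finset G => (phiConst μ A δ.1 F : ℝ))

/-- The lower `μ`-independence density `I̲_μ(A)` of the tuple `A`. -/
noncomputable def lowerIndepDens (G : Type*) {X : Type*} [Group G] [MulAction G X]
    [MeasurableSpace X] (μ : Measure X) {k : ℕ} (A : Fin k → Set X) : ℝ :=
  ⨆ δ : {d : ℝ // 0 < d}, invLiminf (fun F : Finset G => (phiConst μ A δ.1 F : ℝ))

/-- The measure `μ` is invariant under the action of `G`. -/
def InvariantMeasure (G : Type*) {X : Type*} [Group G] [MulAction G X] [MeasurableSpace X]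
    (μ : Measure X) : Prop :=
  ∀ (s : G) (B : Set X), MeasurableSet B → μ ((fun x => s • x) ⁻¹' B) = μ B

/-- The entropy `H_μ(𝒫^F)` of the join `⋁_{s ∈ F} s⁻¹𝒫` of the finite partition `P`. -/
noncomputable def HJoin {G X : Type*} [Group G] [MulAction G X] [MeasurableSpace X]
    (μ : Measure X) {k : ℕ} (P : Fin k → Set X) (F : Finset G) : ℝ :=
  ∑ f : ↥F → Fin k,
    Real.negMulLog (μ (⋂ s : ↥F, (fun x => (s : G) • x) ⁻¹' P (f s))).toReal

/-- `P` is a finite measurable partition of `X` (members may be empty). -/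
def IsMeasPartition {X : Type*} [MeasurableSpace X] {k : ℕ} (P : Fin k → Set X) : Prop :=
  (∀ i, MeasurableSet (P i)) ∧ (Pairwise fun i j => Disjoint (P i) (P j)) ∧
    (⋃ i, P i) = Set.univ

/-- `x` is a (topological) IE-tuple for the action of `G` on `X`. -/
def IsIETuple (G : Type*) {X : Type*} [Group G] [TopologicalSpace X] [MulAction G X]
    {k : ℕ} (x : Fin k → X) : Prop :=
  ∀ U : Fin k → Set X, (∀ i, U i ∈ nhds (x i)) →
    ∃ d : ℝ, 0 < d ∧ ∀ (K : Finset G) (δ : ℝ), 0 < δ →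
      ∃ (F : Finset G) (J : Set G), FolnerInv K δ F ∧ IndepSet U (Set.univ : Set X) J ∧
        d * (F.card : ℝ) ≤ (((F : Set G)) ∩ J).ncard

/-- `x` is a `μ`-IE-tuple. -/
def IsMuIETuple (G : Type*) {X : Type*} [Group G] [TopologicalSpace X] [MulAction G X]
    [MeasurableSpace X] (μ : Measure X) {k : ℕ} (x : Fin k → X) : Prop :=
  ∀ U : Fin k → Set X, (∀ i, U i ∈ nhds (x i)) → 0 < upperIndepDens G μ U

/-- The defining property of a `μ`-entropy tuple: whenever `U₁, …, U_l` are pairwise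
disjoint Borel neighbourhoods of the distinct points in the list `x₁, …, x_k`, every
finite Borel partition of `X` refining the cover `{U₁ᶜ, …, U_lᶜ}` has positive measure
entropy. -/
def MuEntropyTupleProp (G : Type*) {X : Type*} [Group G] [TopologicalSpace X]
    [MulAction G X] [MeasurableSpace X] (μ : Measure X) {k : ℕ} (x : Fin k → X) : Prop :=
  ∀ (l : ℕ) (z : Fin l → X) (U : Fin l → Set X),
    Function.Injective z → Set.range z = Set.range x →
    (∀ j, U j ∈ nhds (z j)) → (∀ j, MeasurableSet (U j)) →
    (Pairwise fun i j => Disjoint (U i) (U j)) →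
    ∀ (r : ℕ) (P : Fin r → Set X), IsMeasPartition P → (∀ a, ∃ j, P a ⊆ (U j)ᶜ) →
      0 < invLimsup (fun F : Finset G => HJoin μ P F)

section Combinatorics

/-- `S` shatters `J`: every pattern `J → Fin l` is realised on `J` by some member of the class
`S` of partial functions. -/
def ShattersPartial {α : Type*} {l : ℕ} (S : Set (α → Option (Fin l))) (J : Finset α) : Prop :=
  ∀ σ : α → Fin l, ∃ ω ∈ S, ∀ s ∈ J, ω s = some (σ s)

/-- The subsets of `Z` shattered by `S`. -/
noncomputable def shatteredSets {α : Type*} {l : ℕ} (S : Set (α → Option (Fin l)))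
    (Z : Finset α) : Finset (Finset α) :=
  Z.powerset.filter (ShattersPartial S)

lemma mem_shatteredSets {α : Type*} {l : ℕ} {S : Set (α → Option (Fin l))}
    {Z J : Finset α} : J ∈ shatteredSets S Z ↔ J ⊆ Z ∧ ShattersPartial S J := by
  simp [shatteredSets]

lemma shatteredSets_mono {α : Type*} {l : ℕ} {S S' : Set (α → Option (Fin l))}
    {Z Z' : Finset α} (hS : S ⊆ S') (hZ : Z ⊆ Z') :
    shatteredSets S Z ⊆ shatteredSets S' Z' := by
  intro J hJ
  rw [mem_shatteredSets] at hJ ⊢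
  refine ⟨hJ.1.trans hZ, fun σ => ?_⟩
  obtain ⟨ω, h1, h2⟩ := hJ.2 σ
  exact ⟨ω, hS h1, h2⟩

/-- Some fibre over a coordinate shatters a definite proportion fewer sets. -/
lemma exists_card_shatteredSets_fibre_le {α : Type*} {l : ℕ} (hl : 2 ≤ l)
    (S : Set (α → Option (Fin l))) (Z : Finset α) {a : α} (ha : a ∉ Z) :
    ∃ i : Fin l, ((shatteredSets {ω ∈ S | ω a = some i} Z).card : ℝ) ≤
      (((l : ℝ) - 1) / l) * (shatteredSets S (insert a Z)).card := by
  by_contra! hcon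
  set v : ℝ := ((shatteredSets S (insert a Z)).card : ℝ) with hv
  set Q := shatteredSets S Z with hQ
  set I : Fin l → Finset (Finset α) := fun i => shatteredSets {ω ∈ S | ω a = some i} Z with hI
  have hIQ : ∀ i, I i ⊆ Q := fun i => shatteredSets_mono (fun ω h => h.1) subset_rfl
  set W := Q.filter (fun J => ∀ i, J ∈ I i) with hW
  have hl0 : (0 : ℝ) < l := by positivity
  have hqv : (Q.card : ℝ) + W.card ≤ v := by
    have hdisj : Disjoint Q (W.image (insert a)) := by
      rw [Finset.disjoint_left]
      intro J hJ hJ'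
      obtain ⟨J', -, rfl⟩ := Finset.mem_image.1 hJ'
      exact ha ((mem_shatteredSets.1 hJ).1 (Finset.mem_insert_self _ _))
    have hinj : (W.image (insert a)).card = W.card := by
      apply Finset.card_image_of_injOn
      intro J hJ J' hJ' h
      have h1 : a ∉ J := fun h => ha
        ((mem_shatteredSets.1 (Finset.mem_filter.1 hJ).1).1 h)
      have h2 : a ∉ J' := fun h => ha
        ((mem_shatteredSets.1 (Finset.mem_filter.1 hJ').1).1 h)
      rw [← Finset.erase_insert h1, ← Finset.erase_insert h2, h]
    have hsub : Q ∪ W.image (insert a) ⊆ shatteredSets S (insert a Z) := by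
      apply Finset.union_subset (shatteredSets_mono subset_rfl (Finset.subset_insert _ _))
      intro J hJ
      obtain ⟨J', hJ', rfl⟩ := Finset.mem_image.1 hJ
      obtain ⟨hJQ, hJI⟩ := Finset.mem_filter.1 hJ'
      refine mem_shatteredSets.2
        ⟨Finset.insert_subset_insert _ (mem_shatteredSets.1 hJQ).1, fun σ => ?_⟩
      obtain ⟨ω, ⟨h1, h2⟩, h3⟩ := (mem_shatteredSets.1 (hJI (σ a))).2 σ
      refine ⟨ω, h1, fun s hs => ?_⟩
      rcases Finset.mem_insert.1 hs with rfl | hs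
      · exact h2
      · exact h3 s hs
    have := Finset.card_le_card hsub
    rw [Finset.card_union_of_disjoint hdisj, hinj] at this
    rw [hv]
    exact_mod_cast this
  have hQW : (Q.card : ℝ) - W.card ≤ ∑ i : Fin l, ((Q.card : ℝ) - (I i).card) := by
    have hsub : Q \ W ⊆ Finset.univ.biUnion (fun i => Q \ I i) := by
      intro J hJ
      obtain ⟨h1, h2⟩ := Finset.mem_sdiff.1 hJ
      rw [hW, Finset.mem_filter] at h2
      push Not at h2
      obtain ⟨i, hi⟩ := h2 h1
      exact Finset.mem_biUnion.2 ⟨i, Finset.mem_univ _, Finset.mem_sdiff.2 ⟨h1, hi⟩⟩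
    have h1 := (Finset.card_le_card hsub).trans Finset.card_biUnion_le
    have h2 : ((Q \ W).card : ℝ) = Q.card - W.card := by
      rw [Finset.card_sdiff_of_subset (Finset.filter_subset _ _),
        Nat.cast_sub (Finset.card_le_card (Finset.filter_subset _ _))]
    have h3 : ∀ i, ((Q \ I i).card : ℝ) = Q.card - (I i).card := fun i => by
      rw [Finset.card_sdiff_of_subset (hIQ i), Nat.cast_sub (Finset.card_le_card (hIQ i))]
    rw [← h2, ← Finset.sum_congr rfl fun i _ => h3 i]
    exact_mod_cast h1
  have hlt : ∑ i : Fin l, ((Q.card : ℝ) - (I i).card) <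
      ∑ _i : Fin l, ((Q.card : ℝ) - (((l : ℝ) - 1) / l) * v) := by
    apply Finset.sum_lt_sum_of_nonempty
    · exact ⟨⟨0, by omega⟩, Finset.mem_univ _⟩
    · intro i _
      have := hcon i
      linarith
  rw [Finset.sum_const, Finset.card_univ, Fintype.card_fin, nsmul_eq_mul] at hlt
  have h4 : (l : ℝ) * (Q.card - (((l : ℝ) - 1) / l) * v) = l * Q.card - (l - 1) * v := by
    field_simp
  have h5 : (Q.card : ℝ) ≤ v := le_trans (by linarith [(Nat.cast_nonneg W.card : (0:ℝ) ≤ _)]) hqv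
  have h6 : (2 : ℝ) ≤ l := by exact_mod_cast hl
  nlinarith [mul_le_mul_of_nonneg_left h5 (sub_nonneg.2 h6)]

/-- A class of partial functions shattering few sets is covered by few total functions
avoiding its members. -/
lemma exists_avoiding_cover {α : Type*} {l : ℕ} (hl : 2 ≤ l) (p : ℕ) (Z : Finset α) :
    ∀ S : Set (α → Option (Fin l)), ∃ T : Finset (α → Fin l),
      (∀ ω ∈ S, ∃ τ ∈ T, ∀ s ∈ Z, ω s ≠ some (τ s)) ∧
      (T.card : ℝ) ≤ (1 + (((l : ℝ) - 1) / l) ^ p) ^ Z.card * (shatteredSets S Z).card ^ p := by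
  have hl1 : (1 : ℝ) ≤ l := by exact_mod_cast (by omega : 1 ≤ l)
  have hρ : 0 ≤ ((l : ℝ) - 1) / l := by apply div_nonneg <;> linarith
  induction Z using Finset.induction_on with
  | empty =>
    intro S
    rcases S.eq_empty_or_nonempty with rfl | hS
    · refine ⟨∅, by simp, ?_⟩
      simp only [Finset.card_empty, Nat.cast_zero]
      positivity
    · refine ⟨{fun _ => ⟨0, by omega⟩}, by simp, ?_⟩
      have : shatteredSets S ∅ = {∅} := by
        ext J
        rw [mem_shatteredSets, Finset.mem_singleton, Finset.subset_empty]
        refine ⟨fun h => h.1, fun h => ⟨h, fun σ => ?_⟩⟩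
        obtain ⟨ω, hω⟩ := hS
        exact ⟨ω, hω, by simp [h]⟩
      simp [this]
  | insert a Z ha ih =>
    intro S
    obtain ⟨i, hi⟩ := exists_card_shatteredSets_fibre_le hl S Z ha
    obtain ⟨i', hi'⟩ : ∃ i' : Fin l, i' ≠ i := by
      have : Nontrivial (Fin l) := Fin.nontrivial_iff_two_le.2 hl
      exact exists_ne i
    obtain ⟨T₁, hc₁, hT₁⟩ := ih {ω ∈ S | ω a ≠ some i}
    obtain ⟨T₂, hc₂, hT₂⟩ := ih {ω ∈ S | ω a = some i}
    refine ⟨T₁.image (fun τ => Function.update τ a i) ∪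
      T₂.image (fun τ => Function.update τ a i'), fun ω hω => ?_, ?_⟩
    · have key : ∀ (τ : α → Fin l) (b : Fin l), (∀ s ∈ Z, ω s ≠ some (τ s)) → ω a ≠ some b →
          ∀ s ∈ insert a Z, ω s ≠ some (Function.update τ a b s) := by
        intro τ b h1 h2 s hs
        by_cases hsa : s = a
        · subst hsa; simpa using h2
        · rw [Function.update_of_ne hsa]
          exact h1 s ((Finset.mem_insert.1 hs).resolve_left hsa)
      by_cases h : ω a = some i
      · obtain ⟨τ, hτ, h'⟩ := hc₂ ω ⟨hω, h⟩
        refine ⟨_, Finset.mem_union_right _ (Finset.mem_image_of_mem _ hτ), key τ i' h' ?_⟩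
        rw [h]
        simpa using hi'.symm
      · obtain ⟨τ, hτ, h'⟩ := hc₁ ω ⟨hω, h⟩
        exact ⟨_, Finset.mem_union_left _ (Finset.mem_image_of_mem _ hτ), key τ i h' h⟩
    · set v : ℝ := ((shatteredSets S (insert a Z)).card : ℝ) with hv
      set ρ : ℝ := ((l : ℝ) - 1) / l with hρdef
      have h1 : ((shatteredSets {ω ∈ S | ω a ≠ some i} Z).card : ℝ) ≤ v := by
        rw [hv]
        exact_mod_cast Finset.card_le_card
          (shatteredSets_mono (Set.sep_subset _ _) (Finset.subset_insert _ _))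
      have hcard : ((T₁.image (fun τ => Function.update τ a i) ∪
          T₂.image (fun τ => Function.update τ a i')).card : ℝ) ≤ T₁.card + T₂.card := by
        exact_mod_cast (Finset.card_union_le _ _).trans
          (add_le_add Finset.card_image_le Finset.card_image_le)
      have hA : (0 : ℝ) ≤ (1 + ρ ^ p) ^ Z.card := by positivity
      calc _ ≤ (T₁.card : ℝ) + T₂.card := hcard
        _ ≤ (1 + ρ ^ p) ^ Z.card * v ^ p + (1 + ρ ^ p) ^ Z.card * (ρ * v) ^ p := by
          refine add_le_add (hT₁.trans ?_) (hT₂.trans ?_)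
          · exact mul_le_mul_of_nonneg_left (pow_le_pow_left₀ (by positivity) h1 p) hA
          · exact mul_le_mul_of_nonneg_left (pow_le_pow_left₀ (by positivity) hi p) hA
        _ = _ := by
          rw [Finset.card_insert_of_notMem ha, pow_succ, mul_pow]
          ring

/-- If a class of partial functions on `Z` shatters only sets of small density, then it is covered
by a subexponential number of total functions avoiding its members. -/
lemma exists_avoiding_cover_exp {l : ℕ} (hl : 2 ≤ l) {c : ℝ} (hc : 0 < c) :
    ∃ η : ℝ, 0 < η ∧ ∀ {α : Type*} (Z : Finset α) (S : Set (α → Option (Fin l))),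
      (∀ J ⊆ Z, ShattersPartial S J → (J.card : ℝ) ≤ η * Z.card) →
      ∃ T : Finset (α → Fin l), (∀ ω ∈ S, ∃ τ ∈ T, ∀ s ∈ Z, ω s ≠ some (τ s)) ∧
        (T.card : ℝ) ≤ Real.exp (c * Z.card) := by
  have hl1 : (1 : ℝ) < l := by exact_mod_cast (by omega : 1 < l)
  set ρ : ℝ := ((l : ℝ) - 1) / l with hρdef
  have hρ0 : 0 ≤ ρ := by apply div_nonneg <;> linarith
  have hρ1 : ρ < 1 := by rw [hρdef, div_lt_one (by linarith)]; linarith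
  obtain ⟨p, hp⟩ := exists_pow_lt_of_lt_one (show 0 < c / 3 by positivity) hρ1
  set y : ℝ := min 1 (c / (3 * (p + 1))) with hy
  have hy0 : 0 < y := by positivity
  have hpy : p * y ≤ c / 3 := by
    calc p * y ≤ (p + 1) * (c / (3 * (p + 1))) := by
          apply mul_le_mul (by linarith) (min_le_right _ _) hy0.le (by positivity)
      _ = c / 3 := by field_simp
  set L : ℝ := -Real.log y with hL
  have hL0 : 0 ≤ L := by
    rw [hL, neg_nonneg]
    exact Real.log_nonpos hy0.le (min_le_left _ _)
  refine ⟨c / (3 * (p + 1) * (L + 1)), by positivity, fun {α} Z S hS => ?_⟩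
  set η : ℝ := c / (3 * (p + 1) * (L + 1)) with hη
  have hpη : p * (η * L) ≤ c / 3 := by
    calc p * (η * L) ≤ (p + 1) * (η * (L + 1)) := by
          have : 0 ≤ η := by positivity
          gcongr <;> linarith
      _ = c / 3 := by rw [hη]; field_simp
  obtain ⟨T, hT, hcard⟩ := exists_avoiding_cover hl p Z S
  refine ⟨T, hT, hcard.trans ?_⟩
  set n : ℝ := (Z.card : ℝ) with hn
  have hn0 : 0 ≤ n := by positivity
  have hI : ((shatteredSets S Z).card : ℝ) ≤ Real.exp (n * (y + η * L)) := by
    have h1 : ∀ J ∈ shatteredSets S Z,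
        (1 : ℝ) ≤ Real.exp (n * (η * L)) * (y ^ J.card * 1 ^ (Z.card - J.card)) := by
      intro J hJ
      have h2 := hS J (mem_shatteredSets.1 hJ).1 (mem_shatteredSets.1 hJ).2
      have h3 : y ^ J.card = Real.exp (-(J.card * L)) := by
        rw [hL, mul_neg, neg_neg, ← Real.log_pow, Real.exp_log (by positivity)]
      rw [one_pow, mul_one, h3, ← Real.exp_add, Real.one_le_exp_iff]
      nlinarith [mul_le_mul_of_nonneg_right h2 hL0]
    calc ((shatteredSets S Z).card : ℝ) = ∑ J ∈ shatteredSets S Z, (1 : ℝ) := by simp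
      _ ≤ ∑ J ∈ shatteredSets S Z,
          Real.exp (n * (η * L)) * (y ^ J.card * 1 ^ (Z.card - J.card)) :=
        Finset.sum_le_sum h1
      _ ≤ ∑ J ∈ Z.powerset,
          Real.exp (n * (η * L)) * (y ^ J.card * 1 ^ (Z.card - J.card)) := by
        apply Finset.sum_le_sum_of_subset_of_nonneg (Finset.filter_subset _ _)
        intros; positivity
      _ = Real.exp (n * (η * L)) * (y + 1) ^ Z.card := by
        rw [← Finset.mul_sum, Finset.sum_pow_mul_eq_add_pow]
      _ ≤ Real.exp (n * (η * L)) * Real.exp y ^ Z.card := by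
        gcongr
        exact Real.add_one_le_exp y
      _ = _ := by
        rw [← Real.exp_nat_mul, ← Real.exp_add]
        congr 1
        rw [← hn]; ring
  calc (1 + ρ ^ p) ^ Z.card * ((shatteredSets S Z).card : ℝ) ^ p
      ≤ Real.exp (ρ ^ p) ^ Z.card * Real.exp (n * (y + η * L)) ^ p := by
        gcongr
        rw [add_comm]
        exact Real.add_one_le_exp _
    _ = Real.exp (n * (ρ ^ p + p * y + p * (η * L))) := by
        rw [← Real.exp_nat_mul, ← Real.exp_nat_mul, ← Real.exp_add]
        congr 1
        rw [← hn]; ring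
    _ ≤ Real.exp (c * n) := by
        rw [Real.exp_le_exp, mul_comm c]
        apply mul_le_mul_of_nonneg_left _ hn0
        linarith

end Combinatorics

section Limsup

variable {G : Type*} [Group G]

lemma FolnerInv.mono {K K' : Finset G} {δ δ' : ℝ} {F : Finset G} (hK : K ⊆ K') (hδ : δ' ≤ δ)
    (h : FolnerInv K' δ' F) : FolnerInv K δ F := by
  refine ⟨h.1, ?_⟩
  calc (1 - δ) * (F.card : ℝ) ≤ (1 - δ') * F.card := by gcongr
    _ ≤ _ := h.2
    _ ≤ _ := by
      have : ((F : Set G) ∩ {s : G | ∀ g ∈ K', g * s ∈ F}).ncard ≤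
          ((F : Set G) ∩ {s : G | ∀ g ∈ K, g * s ∈ F}).ncard := by
        apply Set.ncard_le_ncard _ (F.finite_toSet.subset inter_subset_left)
        exact inter_subset_inter_right _ fun s hs g hg => hs g (hK hg)
      exact_mod_cast this

lemma invLimsup_pos_iff (hamen : FolnerAmenable G) {ψ : Finset G → ℝ} {C : ℝ}
    (h0 : ∀ F, 0 ≤ ψ F) (hC : ∀ F, ψ F ≤ C * F.card) :
    0 < invLimsup ψ ↔ ∃ d : ℝ, 0 < d ∧ ∀ (K : Finset G) (δ : ℝ), 0 < δ →
      ∃ F : Finset G, FolnerInv K δ F ∧ d * F.card ≤ ψ F := by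
  have hcard : ∀ {K : Finset G} {δ : ℝ} {F : Finset G}, FolnerInv K δ F → (0 : ℝ) < F.card :=
    fun h => by exact_mod_cast h.1.card_pos
  set A : Finset G → {d : ℝ // 0 < d} → Set ℝ := fun K δ =>
    (fun F : Finset G => ψ F / (F.card : ℝ)) '' {F : Finset G | FolnerInv K δ.1 F} with hA
  have hdef : invLimsup ψ = ⨅ (K : Finset G) (δ : {d : ℝ // 0 < d}), sSup (A K δ) := rfl
  have hnonneg : ∀ K δ, 0 ≤ sSup (A K δ) := by
    intro K δ
    apply Real.sSup_nonneg
    rintro _ ⟨F, -, rfl⟩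
    exact div_nonneg (h0 F) (by positivity)
  have hbdd : ∀ K δ, BddAbove (A K δ) := by
    intro K δ
    refine ⟨C, ?_⟩
    rintro _ ⟨F, hF, rfl⟩
    exact (div_le_iff₀ (hcard hF)).2 (hC F)
  have hbelow : ∀ K, BddBelow (range fun δ => sSup (A K δ)) := fun K =>
    ⟨0, by rintro _ ⟨δ, rfl⟩; exact hnonneg K δ⟩
  have hne : Nonempty {d : ℝ // 0 < d} := ⟨⟨1, one_pos⟩⟩
  have hbelow' : BddBelow (range fun K => ⨅ δ, sSup (A K δ)) :=
    ⟨0, by rintro _ ⟨K, rfl⟩; exact le_ciInf fun δ => hnonneg K δ⟩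
  constructor
  · intro hpos
    refine ⟨invLimsup ψ / 2, by positivity, fun K δ hδ => ?_⟩
    have h1 : invLimsup ψ ≤ sSup (A K ⟨δ, hδ⟩) := by
      rw [hdef]
      exact (ciInf_le hbelow' K).trans (ciInf_le (hbelow K) _)
    obtain ⟨F₀, hF₀⟩ := hamen K δ hδ
    obtain ⟨_, ⟨F, hF, rfl⟩, hlt⟩ := exists_lt_of_lt_csSup (s := A K ⟨δ, hδ⟩)
      ⟨_, F₀, hF₀, rfl⟩ (show invLimsup ψ / 2 < _ by linarith)
    exact ⟨F, hF, ((lt_div_iff₀ (hcard hF)).1 hlt).le⟩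
  · rintro ⟨d, hd, h⟩
    rw [hdef]
    refine lt_of_lt_of_le hd (le_ciInf fun K => le_ciInf fun δ => ?_)
    obtain ⟨F, hF, hle⟩ := h K δ.1 δ.2
    exact le_csSup_of_le (hbdd K δ) ⟨F, hF, rfl⟩ ((le_div_iff₀ (hcard hF)).2 hle)

variable {X : Type*} [MulAction G X]

lemma IndepRel.anti {k : ℕ} {A : Fin k → Set X} {D : G → Set X} {J J' : Set G}
    (h : IndepRel A D J) (hJ : J' ⊆ J) : IndepRel A D J' :=
  fun F hF => h F (hF.trans hJ)

/-- Independence passes to a tuple whose members contain members of the original tuple. -/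
lemma IndepRel.of_subset_comp {k l : ℕ} {A : Fin k → Set X} {B : Fin l → Set X} {D : G → Set X}
    {J : Set G} (h : IndepRel A D J) (g : Fin l → Fin k) (hg : ∀ j, A (g j) ⊆ B j) :
    IndepRel B D J := by
  intro F hF hne σ
  obtain ⟨x, hx⟩ := h F hF hne (fun s => g (σ s))
  refine ⟨x, ?_⟩
  simp only [mem_iInter] at hx ⊢
  exact fun s hs => ⟨(hx s hs).1, hg _ (hx s hs).2⟩

lemma bddAbove_indep_card {k : ℕ} (A : Fin k → Set X) (D : G → Set X) (F : Finset G) :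
    BddAbove {m : ℕ | ∃ J : Set G, IndepRel A D J ∧ m = ((F : Set G) ∩ J).ncard} := by
  refine ⟨F.card, ?_⟩
  rintro _ ⟨J, -, rfl⟩
  rw [← Set.ncard_coe_finset F]
  exact Set.ncard_le_ncard inter_subset_left F.finite_toSet

lemma exists_card_eq_maxIndep {k : ℕ} (A : Fin k → Set X) (D : G → Set X) (F : Finset G) :
    ∃ J ⊆ F, IndepRel A D (J : Set G) ∧ J.card = maxIndep A D F := by
  have hmem := Nat.sSup_mem (s := {m : ℕ | ∃ J : Set G, IndepRel A D J ∧
    m = ((F : Set G) ∩ J).ncard})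
    ⟨_, ∅, fun F hF hne => absurd hF (by simpa using hne.ne_empty), rfl⟩
    (bddAbove_indep_card A D F)
  obtain ⟨J, hJ, hm⟩ := hmem
  refine ⟨F.filter (· ∈ J), Finset.filter_subset _ _, hJ.anti ?_, ?_⟩
  · intro s hs
    simpa using (Finset.mem_filter.1 (Finset.mem_coe.1 hs)).2
  · rw [maxIndep, hm, ← Set.ncard_coe_finset]
    congr 1
    ext s
    simp

lemma card_le_maxIndep {k : ℕ} {A : Fin k → Set X} {D : G → Set X} {F J : Finset G}
    (hJF : J ⊆ F) (hJ : IndepRel A D (J : Set G)) : J.card ≤ maxIndep A D F := by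
  apply le_csSup (bddAbove_indep_card A D F)
  refine ⟨J, hJ, ?_⟩
  rw [inter_eq_self_of_subset_right (by exact_mod_cast hJF), Set.ncard_coe_finset]

lemma maxIndep_le_card {k : ℕ} (A : Fin k → Set X) (D : G → Set X) (F : Finset G) :
    maxIndep A D F ≤ F.card := by
  obtain ⟨J, hJ, -, h⟩ := exists_card_eq_maxIndep A D F
  exact h ▸ Finset.card_le_card hJ

variable [MeasurableSpace X]

lemma le_phiConst_iff {μ : Measure X} [IsProbabilityMeasure μ] {k : ℕ} {A : Fin k → Set X}
    {δ : ℝ} (hδ : 0 < δ) {F : Finset G} {a : ℝ} :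
    a ≤ (phiConst μ A δ F : ℝ) ↔ ∀ D : Set X, MeasurableSet D → 1 - δ ≤ (μ D).toReal →
      ∃ J ⊆ F, IndepRel A (fun _ => D) (J : Set G) ∧ a ≤ J.card := by
  constructor
  · intro h D hD hμ
    obtain ⟨J, hJF, hJ, hcard⟩ := exists_card_eq_maxIndep A (fun _ : G => D) F
    refine ⟨J, hJF, hJ, h.trans ?_⟩
    rw [hcard]
    have hle : phiConst μ A δ F ≤ maxIndep A (fun _ : G => D) F :=
      csInf_le (OrderBot.bddBelow _) ⟨D, hD, hμ, rfl⟩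
    exact_mod_cast hle
  · intro h
    obtain ⟨D, hD, hμ, hm⟩ := Nat.sInf_mem (s := {m : ℕ | ∃ D : Set X, MeasurableSet D ∧
      1 - δ ≤ (μ D).toReal ∧ m = maxIndep A (fun _ : G => D) F})
      ⟨_, univ, MeasurableSet.univ, by simp [hδ.le], rfl⟩
    obtain ⟨J, hJF, hJ, hle⟩ := h D hD hμ
    rw [phiConst, hm]
    exact hle.trans (by exact_mod_cast card_le_maxIndep hJF hJ)

lemma phiConst_le_card {μ : Measure X} [IsProbabilityMeasure μ] {k : ℕ} {A : Fin k → Set X}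
    {δ : ℝ} (hδ : 0 < δ) (F : Finset G) : phiConst μ A δ F ≤ F.card := by
  have hle : phiConst μ A δ F ≤ maxIndep A (fun _ : G => univ) F :=
    csInf_le (OrderBot.bddBelow _) ⟨univ, MeasurableSet.univ, by simp [hδ.le], rfl⟩
  exact hle.trans (maxIndep_le_card _ _ F)

lemma upperIndepDens_pos_iff (hamen : FolnerAmenable G) {μ : Measure X} [IsProbabilityMeasure μ]
    {k : ℕ} {A : Fin k → Set X} :
    0 < upperIndepDens G μ A ↔ ∃ δ : ℝ, 0 < δ ∧ ∃ d : ℝ, 0 < d ∧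
      ∀ (K : Finset G) (ε : ℝ), 0 < ε → ∃ F : Finset G, FolnerInv K ε F ∧
        ∀ D : Set X, MeasurableSet D → 1 - δ ≤ (μ D).toReal →
          ∃ J ⊆ F, IndepRel A (fun _ => D) (J : Set G) ∧ d * F.card ≤ J.card := by
  have hne : Nonempty {d : ℝ // 0 < d} := ⟨⟨1, one_pos⟩⟩
  have hiff : ∀ δ : {d : ℝ // 0 < d},
      0 < invLimsup (fun F : Finset G => (phiConst μ A δ.1 F : ℝ)) ↔ ∃ d : ℝ, 0 < d ∧
      ∀ (K : Finset G) (ε : ℝ), 0 < ε → ∃ F : Finset G, FolnerInv K ε F ∧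
        ∀ D : Set X, MeasurableSet D → 1 - δ.1 ≤ (μ D).toReal →
          ∃ J ⊆ F, IndepRel A (fun _ => D) (J : Set G) ∧ d * F.card ≤ J.card := by
    intro δ
    rw [invLimsup_pos_iff hamen (C := 1) (fun F => Nat.cast_nonneg _)
      (fun F => by
        rw [one_mul]
        exact Nat.cast_le.2 (phiConst_le_card δ.2 F))]
    simp_rw [le_phiConst_iff δ.2]
  have hbdd : BddAbove (range fun δ : {d : ℝ // 0 < d} =>
      invLimsup (fun F : Finset G => (phiConst μ A δ.1 F : ℝ))) := by
    refine ⟨1, ?_⟩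
    rintro _ ⟨δ, rfl⟩
    have h0 : ∀ (K : Finset G) (ε : {d : ℝ // 0 < d}), 0 ≤ sSup ((fun F : Finset G =>
        (phiConst μ A δ.1 F : ℝ) / (F.card : ℝ)) '' {F : Finset G | FolnerInv K ε.1 F}) := by
      intro K ε
      apply Real.sSup_nonneg
      rintro _ ⟨F, -, rfl⟩
      positivity
    refine (ciInf_le ⟨0, ?_⟩ ∅).trans ((ciInf_le ⟨0, ?_⟩ ⟨1, one_pos⟩).trans ?_)
    · rintro _ ⟨K, rfl⟩
      exact le_ciInf fun ε => h0 K ε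
    · rintro _ ⟨ε, rfl⟩
      exact h0 ∅ ε
    · apply Real.sSup_le _ zero_le_one
      rintro _ ⟨F, -, rfl⟩
      exact div_le_one_of_le₀ (Nat.cast_le.2 (phiConst_le_card δ.2 F)) (by positivity)
  constructor
  · intro h
    obtain ⟨δ, hδ⟩ := exists_lt_of_lt_ciSup h
    exact ⟨δ.1, δ.2, (hiff δ).1 hδ⟩
  · rintro ⟨δ, hδ, h⟩
    exact lt_of_lt_of_le ((hiff ⟨δ, hδ⟩).2 h) (le_ciSup hbdd ⟨δ, hδ⟩)

lemma upperIndepDens_pos_of_subset_comp (hamen : FolnerAmenable G) {μ : Measure X}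
    [IsProbabilityMeasure μ] {k l : ℕ} {A : Fin k → Set X} {B : Fin l → Set X}
    (g : Fin l → Fin k) (hg : ∀ j, A (g j) ⊆ B j) (h : 0 < upperIndepDens G μ A) :
    0 < upperIndepDens G μ B := by
  rw [upperIndepDens_pos_iff hamen] at h ⊢
  obtain ⟨δ, hδ, d, hd, h⟩ := h
  refine ⟨δ, hδ, d, hd, fun K ε hε => ?_⟩
  obtain ⟨F, hF, h⟩ := h K ε hε
  refine ⟨F, hF, fun D hD hμ => ?_⟩
  obtain ⟨J, hJF, hJ, hle⟩ := h D hD hμ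
  exact ⟨J, hJF, hJ.of_subset_comp g hg, hle⟩

end Limsup

section Entropy

lemma sum_negMulLog_le_sum_mul_neg_log {ι : Type*} [Fintype ι] {p q : ι → ℝ}
    (hp : ∀ i, 0 ≤ p i) (hp1 : ∑ i, p i = 1) (hq : ∀ i, 0 < q i) (hq1 : ∑ i, q i ≤ 1) :
    ∑ i, Real.negMulLog (p i) ≤ ∑ i, p i * (-Real.log (q i)) := by
  have h : ∀ i, Real.negMulLog (p i) - p i * (-Real.log (q i)) ≤ q i - p i := by
    intro i
    rcases (hp i).eq_or_lt with h0 | h0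
    · simp [← h0, (hq i).le]
    · have h1 := Real.log_le_sub_one_of_pos (div_pos (hq i) h0)
      rw [Real.log_div (hq i).ne' h0.ne'] at h1
      have h2 := mul_le_mul_of_nonneg_left h1 h0.le
      have h3 : p i * (q i / p i - 1) = q i - p i := by field_simp
      rw [Real.negMulLog]
      linarith
  have h' := Finset.sum_le_sum fun i (_ : i ∈ Finset.univ) => h i
  rw [Finset.sum_sub_distrib, Finset.sum_sub_distrib] at h'
  linarith

variable {G X : Type*} [Group G] [MulAction G X] [MeasurableSpace X]

/-- The `p`-name of a point over the finite set `F`. -/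
def nameOn {r : ℕ} (p : X → Fin r) (F : Finset G) (x : X) : ↥F → Fin r := fun s => p ((s : G) • x)

lemma IsMeasPartition.exists_labelling {r : ℕ} {P : Fin r → Set X} (hP : IsMeasPartition P) :
    ∃ p : X → Fin r, Measurable p ∧ P = fun i => p ⁻¹' {i} := by
  obtain ⟨hm, hd, hu⟩ := hP
  have hex : ∀ x, ∃ i, x ∈ P i := fun x => mem_iUnion.1 (hu ▸ mem_univ x)
  choose p hp using hex
  have hPp : P = fun i => p ⁻¹' {i} := by
    funext i
    ext x
    constructor
    · intro hx
      by_contra hne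
      exact (Set.disjoint_left.1 (hd (fun h => hne h : p x ≠ i)) (hp x)) hx
    · rintro rfl
      exact hp x
  refine ⟨p, measurable_to_countable' fun i => ?_, hPp⟩
  have := hm i
  rwa [hPp] at this

lemma isMeasPartition_of_labelling {r : ℕ} {p : X → Fin r} (hp : Measurable p) :
    IsMeasPartition fun i => p ⁻¹' {i} := by
  refine ⟨fun i => hp (measurableSet_singleton i), fun i j hij => ?_, ?_⟩
  · exact Disjoint.preimage p (by simpa using hij)
  · ext x; simp

lemma HJoin_eq_sum_nameOn {μ : Measure X} {r : ℕ} (p : X → Fin r) (F : Finset G) :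
    HJoin μ (fun i => p ⁻¹' {i}) F =
      ∑ f : ↥F → Fin r, Real.negMulLog (μ.real (nameOn p F ⁻¹' {f})) := by
  unfold HJoin
  refine Finset.sum_congr rfl fun f _ => ?_
  have h : (⋂ s : ↥F, (fun x => (s : G) • x) ⁻¹' (p ⁻¹' {f s})) = nameOn p F ⁻¹' {f} := by
    ext x
    simp [nameOn, funext_iff]
  rw [h, Measure.real]

variable {μ : Measure X} [IsProbabilityMeasure μ]

lemma HJoin_nonneg {r : ℕ} (P : Fin r → Set X) (F : Finset G) : 0 ≤ HJoin μ P F :=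
  Finset.sum_nonneg fun _ _ => Real.negMulLog_nonneg ENNReal.toReal_nonneg measureReal_le_one

variable [MeasurableConstSMul G X]

lemma measurable_nameOn {r : ℕ} {p : X → Fin r} (hp : Measurable p) (F : Finset G) :
    Measurable (nameOn p F) :=
  measurable_pi_iff.2 fun s => hp.comp (measurable_const_smul (s : G))

lemma sum_measureReal_nameOn_mul {r : ℕ} {p : X → Fin r} (hp : Measurable p) (F : Finset G)
    (g : (↥F → Fin r) → ℝ) :
    ∑ f, μ.real (nameOn p F ⁻¹' {f}) * g f = ∫ x, g (nameOn p F x) ∂μ := by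
  have hn := measurable_nameOn (G := G) hp F
  have := Measure.isProbabilityMeasure_map (μ := μ) hn.aemeasurable
  rw [← integral_map (f := g) hn.aemeasurable (measurable_of_finite g).aestronglyMeasurable,
    integral_fintype Integrable.of_finite]
  refine Finset.sum_congr rfl fun f _ => ?_
  rw [map_measureReal_apply hn (measurableSet_singleton f), smul_eq_mul]

lemma sum_measureReal_nameOn {r : ℕ} {p : X → Fin r} (hp : Measurable p) (F : Finset G) :
    ∑ f, μ.real (nameOn p F ⁻¹' {f}) = 1 := by
  have := sum_measureReal_nameOn_mul (μ := μ) hp F (fun _ => 1)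
  simpa using this

/-- The entropy of a partition is controlled by the size of a code together with the error made
when the partition is guessed from the code. -/
lemma HJoin_le_of_code {r : ℕ} {p : X → Fin r} (hp : Measurable p)
    (F : Finset G) {N : ℕ} {Φ : X → Fin N} (hΦ : Measurable Φ) (τ : Fin N → G → Fin r)
    {β : ℝ} (hβ0 : 0 < β) (hβ1 : β < 1) :
    HJoin μ (fun i => p ⁻¹' {i}) F ≤ Real.log N + F.card * (-Real.log (1 - β)) +
      Real.log (r / β) * ∑ t ∈ F, μ.real {x | p (t • x) ≠ τ (Φ x) t} := by
  obtain ⟨x₀⟩ : Nonempty X := by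
    by_contra h
    have := not_nonempty_iff.1 h
    exact (IsProbabilityMeasure.ne_zero μ) (Measure.eq_zero_of_isEmpty μ)
  have hr : (0 : ℝ) < r := by exact_mod_cast (p x₀).pos
  have hr1 : (1 : ℝ) ≤ r := by exact_mod_cast (p x₀).pos
  have hN : (0 : ℝ) < N := by exact_mod_cast (Φ x₀).pos
  set κ : Fin r → Fin r → ℝ := fun i j => if i = j then 1 - β else β / r with hκ
  have hκ0 : ∀ i j, 0 < κ i j := by
    intro i j
    simp only [hκ]
    split_ifs
    · linarith
    · positivity
  have hκ1 : ∀ j, ∑ i, κ i j ≤ 1 := by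
    intro j
    have h1 : ∀ i, κ i j ≤ (if i = j then 1 - β else 0) + β / r := by
      intro i
      simp only [hκ]
      split_ifs
      · have : 0 < β / r := by positivity
        linarith
      · simp
    refine (Finset.sum_le_sum fun i _ => h1 i).trans ?_
    rw [Finset.sum_add_distrib]
    simp only [Finset.sum_ite_eq', Finset.mem_univ, if_true, Finset.sum_const, Finset.card_univ,
      Fintype.card_fin, nsmul_eq_mul]
    rw [mul_div_cancel₀ _ hr.ne']
    linarith
  have hκlog : ∀ i j, -Real.log (κ i j) ≤
      -Real.log (1 - β) + Real.log (r / β) * (if i ≠ j then 1 else 0) := by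
    intro i j
    have h1 : Real.log (1 - β) ≤ 0 := Real.log_nonpos (by linarith) (by linarith)
    by_cases h : i = j
    · simp [hκ, h]
    · simp only [hκ, h, if_false, ne_eq, not_false_eq_true, if_true, mul_one]
      rw [← Real.log_inv, inv_div]
      linarith
  set q : (↥F → Fin r) → ℝ := fun f => (1 / N) * ∑ a : Fin N, ∏ t : ↥F, κ (f t) (τ a t) with hq
  have hq0 : ∀ f, 0 < q f := fun f => by
    have : (Finset.univ : Finset (Fin N)).Nonempty := ⟨Φ x₀, Finset.mem_univ _⟩
    exact mul_pos (by positivity)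
      (Finset.sum_pos (fun a _ => Finset.prod_pos fun t _ => hκ0 _ _) this)
  have hq1 : ∑ f, q f ≤ 1 := by
    simp only [hq]
    rw [← Finset.mul_sum, Finset.sum_comm, one_div, inv_mul_le_iff₀ hN]
    have : ∀ a : Fin N, ∑ f : ↥F → Fin r, ∏ t : ↥F, κ (f t) (τ a t) ≤ 1 := by
      intro a
      have h := Finset.prod_univ_sum (fun _ : ↥F => (Finset.univ : Finset (Fin r)))
        (fun t i => κ i (τ a t))
      rw [Fintype.piFinset_univ] at h
      rw [← h]
      exact Finset.prod_le_one (fun t _ => Finset.sum_nonneg fun i _ => (hκ0 _ _).le)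
        (fun t _ => hκ1 _)
    refine (Finset.sum_le_sum fun a _ => this a).trans ?_
    simp
  have hqlog : ∀ f a, -Real.log (q f) ≤ Real.log N + F.card * (-Real.log (1 - β)) +
      Real.log (r / β) * ∑ t : ↥F, (if f t ≠ τ a t then 1 else 0) := by
    intro f a
    have hprod : 0 < ∏ t : ↥F, κ (f t) (τ a t) := Finset.prod_pos fun t _ => hκ0 _ _
    have h1 : (1 / N) * ∏ t : ↥F, κ (f t) (τ a t) ≤ q f := by
      simp only [hq]
      gcongr
      exact Finset.single_le_sum (f := fun a => ∏ t : ↥F, κ (f t) (τ a t))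
        (fun a _ => (Finset.prod_pos fun t _ => hκ0 _ _).le) (Finset.mem_univ a)
    have h2 := Real.log_le_log (by positivity) h1
    rw [Real.log_mul (by positivity) hprod.ne', one_div, Real.log_inv,
      Real.log_prod fun t _ => (hκ0 _ _).ne'] at h2
    have h3 := Finset.sum_le_sum fun t (_ : t ∈ (Finset.univ : Finset ↥F)) =>
      hκlog (f t) (τ a t)
    rw [Finset.sum_add_distrib, ← Finset.mul_sum, Finset.sum_neg_distrib, Finset.sum_const,
      Finset.card_univ, Fintype.card_coe, nsmul_eq_mul] at h3
    linarith
  have hmeas : ∀ t : G, MeasurableSet {x | p (t • x) ≠ τ (Φ x) t} := by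
    intro t
    have h1 : Measurable fun x => p (t • x) := hp.comp (measurable_const_smul t)
    have h2 : Measurable fun x => τ (Φ x) t := (measurable_of_finite fun a => τ a t).comp hΦ
    exact (measurableSet_eq_fun h1 h2).compl
  have hint : ∀ t : G, Integrable ({x | p (t • x) ≠ τ (Φ x) t}.indicator fun _ => (1 : ℝ)) μ :=
    fun t => (integrable_const 1).indicator (hmeas t)
  have hn := measurable_nameOn (G := G) hp F
  rw [HJoin_eq_sum_nameOn]
  refine (sum_negMulLog_le_sum_mul_neg_log (fun _ => measureReal_nonneg)
    (sum_measureReal_nameOn hp F) hq0 hq1).trans ?_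
  rw [sum_measureReal_nameOn_mul hp F fun f => -Real.log (q f)]
  have hI : Integrable (fun x => Real.log N + F.card * (-Real.log (1 - β)) + Real.log (r / β) *
      ∑ t ∈ F, ({x | p (t • x) ≠ τ (Φ x) t}.indicator (fun _ => (1 : ℝ)) x)) μ :=
    (integrable_const _).add ((integrable_finsetSum _ fun t _ => hint t).const_mul _)
  have hIq : Integrable (fun x => -Real.log (q (nameOn p F x))) μ := by
    have := Measure.isProbabilityMeasure_map (μ := μ) hn.aemeasurable
    exact (Integrable.of_finite (μ := μ.map (nameOn p F))
      (f := fun f => -Real.log (q f))).comp_measurable hn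
  refine (integral_mono hIq hI fun x => ?_).trans_eq ?_
  · refine (hqlog (nameOn p F x) (Φ x)).trans_eq ?_
    simp only [nameOn]
    rw [← Finset.sum_coe_sort F]
    simp only [Set.indicator_apply, Set.mem_ofPred_eq]
    congr!
  · rw [integral_add (integrable_const _) ((integrable_finsetSum _ fun t _ => hint t).const_mul _),
      integral_const_mul, integral_finsetSum _ fun t _ => hint t]
    simp [integral_indicator_const, hmeas]

lemma HJoin_le_log_mul_card {r : ℕ} {P : Fin r → Set X} (hP : IsMeasPartition P) (F : Finset G) :
    HJoin μ P F ≤ (Real.log 2 + Real.log (r / (1 / 2))) * F.card := by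
  obtain ⟨p, hp, rfl⟩ := hP.exists_labelling
  obtain ⟨x₀⟩ : Nonempty X := by
    by_contra h
    have := not_nonempty_iff.1 h
    exact (IsProbabilityMeasure.ne_zero μ) (Measure.eq_zero_of_isEmpty μ)
  have h := HJoin_le_of_code (μ := μ) hp F (N := 1) (Φ := fun _ => 0) measurable_const
    (fun _ _ => p x₀) (β := 1 / 2) (by norm_num) (by norm_num)
  refine h.trans ?_
  have hr1 : (1 : ℝ) ≤ r := by exact_mod_cast (p x₀).pos
  have h1 : ∑ t ∈ F, μ.real {x | p (t • x) ≠ p x₀} ≤ F.card := by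
    refine (Finset.sum_le_sum fun t _ => measureReal_le_one).trans ?_
    simp
  have h2 : 0 ≤ Real.log (r / (1 / 2)) := Real.log_nonneg (by linarith)
  have h3 := mul_le_mul_of_nonneg_left h1 h2
  have h4 : Real.log (1 - 1 / 2) = -Real.log 2 := by
    rw [← Real.log_inv]; norm_num
  rw [h4]
  simp only [Nat.cast_one, Real.log_one, neg_neg]
  linarith

end Entropy

section IndependenceToEntropy

/-- Independence forces many names: if the partition given by `p` refines the cover by the
complements of the members of `U`, an independence set `J` relative to a union of `p`-names over
`F` requires at least `(l / (l - 1)) ^ |J|` names. -/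
lemma pow_card_le_card_names_mul {G X : Type*} [Group G] [MulAction G X] {r l : ℕ} {p : X → Fin r} {U : Fin l → Set X} (hl : 1 ≤ l)
    {j : Fin r → Fin l} (hj : ∀ x, x ∉ U (j (p x))) {F J : Finset G} (hJF : J ⊆ F)
    (hJne : J.Nonempty) (N : Finset (↥F → Fin r))
    (hJ : IndepRel U (fun _ => nameOn p F ⁻¹' N) (J : Set G)) :
    l ^ J.card ≤ N.card * (l - 1) ^ J.card := by
  set B : (↥F → Fin r) → Finset (↥J → Fin l) := fun f =>
    Fintype.piFinset fun s => Finset.univ.erase (j (f ⟨s, hJF s.2⟩)) with hB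
  have hcard : ∀ f ∈ N, (B f).card ≤ (l - 1) ^ J.card := by
    intro f _
    rw [hB, Fintype.card_piFinset]
    simp [Finset.card_erase_of_mem]
  have hcov : (Finset.univ : Finset (↥J → Fin l)) ⊆ N.biUnion B := by
    intro σ _
    obtain ⟨x, hx⟩ := hJ J subset_rfl hJne
      (fun s => if h : s ∈ J then σ ⟨s, h⟩ else ⟨0, by omega⟩)
    simp only [mem_iInter] at hx
    obtain ⟨s₀, hs₀⟩ := hJne
    refine Finset.mem_biUnion.2 ⟨nameOn p F x, (hx s₀ hs₀).1, Fintype.mem_piFinset.2 fun s => ?_⟩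
    refine Finset.mem_erase.2 ⟨fun h => ?_, Finset.mem_univ _⟩
    have h1 := (hx s s.2).2
    simp only [s.2, dif_pos, Subtype.coe_eta, mem_preimage] at h1
    rw [h] at h1
    exact hj _ h1
  have h := (Finset.card_le_card hcov).trans (Finset.card_biUnion_le_card_mul _ _ _ hcard)
  simpa using h

variable {G X : Type*} [Group G] [MulAction G X] [MeasurableSpace X] [MeasurableConstSMul G X]
  {μ : Measure X} [IsProbabilityMeasure μ]

lemma le_HJoin_of_indep {r l : ℕ} {p : X → Fin r} (hp : Measurable p) {U : Fin l → Set X}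
    (hl : 2 ≤ l) {j : Fin r → Fin l} (hj : ∀ x, x ∉ U (j (p x))) {F : Finset G}
    (hF : F.Nonempty) {δ d b : ℝ} (hd : 0 < d)
    (hb : 0 < b) (hbd : b < d * Real.log (l / ((l : ℝ) - 1)))
    (h : ∀ D : Set X, MeasurableSet D → 1 - δ ≤ (μ D).toReal →
      ∃ J ⊆ F, IndepRel U (fun _ => D) (J : Set G) ∧ d * F.card ≤ J.card) :
    δ * b * F.card ≤ HJoin μ (fun i => p ⁻¹' {i}) F := by
  have hn : (0 : ℝ) < F.card := by exact_mod_cast hF.card_pos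
  have hl1 : (1 : ℝ) < l := by exact_mod_cast (by omega : 1 < l)
  set n : ℝ := (F.card : ℝ) with hndef
  set P : (↥F → Fin r) → ℝ := fun f => μ.real (nameOn p F ⁻¹' {f}) with hP
  have hP0 : ∀ f, 0 ≤ P f := fun f => measureReal_nonneg
  have hP1 : ∑ f, P f = 1 := sum_measureReal_nameOn hp F
  set N : Finset (↥F → Fin r) := Finset.univ.filter fun f => Real.exp (-(b * n)) ≤ P f with hN
  have hNcard : (N.card : ℝ) ≤ Real.exp (b * n) := by
    have h1 : (N.card : ℝ) * Real.exp (-(b * n)) ≤ 1 := by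
      rw [← hP1, ← nsmul_eq_mul, ← Finset.sum_const]
      refine (Finset.sum_le_sum fun f hf => (Finset.mem_filter.1 hf).2).trans ?_
      exact Finset.sum_le_sum_of_subset_of_nonneg (Finset.subset_univ _) fun f _ _ => hP0 f
    rw [Real.exp_neg, ← div_eq_mul_inv, div_le_one (Real.exp_pos _)] at h1
    exact h1
  have hD : (μ (nameOn p F ⁻¹' N)).toReal = ∑ f ∈ N, P f := by
    have h1 := sum_measureReal_nameOn_mul (μ := μ) hp F ((N : Set (↥F → Fin r)).indicator 1)
    have h2 : (fun x => (N : Set (↥F → Fin r)).indicator (1 : (↥F → Fin r) → ℝ) (nameOn p F x)) =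
        (nameOn p F ⁻¹' N).indicator 1 := by
      ext x; simp [Set.indicator_apply]
    rw [h2, integral_indicator_one (measurable_nameOn hp F N.measurableSet)] at h1
    rw [← Measure.real, ← h1]
    simp [Set.indicator_apply, hP]
  rw [HJoin_eq_sum_nameOn]
  by_cases hδ : 1 - δ ≤ (μ (nameOn p F ⁻¹' N)).toReal
  · exfalso
    obtain ⟨J, hJF, hJ, hle⟩ := h _ (measurable_nameOn hp F N.measurableSet) hδ
    have hJpos : (0 : ℝ) < J.card := lt_of_lt_of_le (by positivity) hle
    have hJne : J.Nonempty := Finset.card_pos.1 (by exact_mod_cast hJpos)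
    have h1 := pow_card_le_card_names_mul (by omega) hj hJF hJne N hJ
    have h2 : (l : ℝ) ^ J.card ≤ N.card * ((l : ℝ) - 1) ^ J.card := by
      have : ((l - 1 : ℕ) : ℝ) = (l : ℝ) - 1 := by
        rw [Nat.cast_sub (by omega), Nat.cast_one]
      rw [← this]
      exact_mod_cast h1
    have h3 : (l / ((l : ℝ) - 1)) ^ J.card ≤ Real.exp (b * n) := by
      rw [div_pow, div_le_iff₀ (pow_pos (by linarith) _)]
      exact h2.trans (mul_le_mul_of_nonneg_right hNcard (pow_nonneg (by linarith) _))
    have hlog : 0 < Real.log (l / ((l : ℝ) - 1)) := by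
      apply Real.log_pos
      rw [lt_div_iff₀ (by linarith)]
      linarith
    have h4 := Real.log_le_log (pow_pos (div_pos (by linarith) (by linarith)) _) h3
    rw [Real.log_exp, Real.log_pow] at h4
    have h5 := mul_le_mul_of_nonneg_right hle hlog.le
    have h6 := mul_lt_mul_of_pos_right hbd hn
    linarith
  · have h1 : δ ≤ ∑ f ∈ Finset.univ.filter (fun f => ¬ Real.exp (-(b * n)) ≤ P f), P f := by
      have h2 := Finset.sum_filter_add_sum_filter_not Finset.univ
        (fun f => Real.exp (-(b * n)) ≤ P f) P
      rw [hP1] at h2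
      rw [hD] at hδ
      push Not at hδ
      linarith
    have h3 : ∀ f ∈ Finset.univ.filter (fun f => ¬ Real.exp (-(b * n)) ≤ P f),
        P f * (b * n) ≤ Real.negMulLog (P f) := by
      intro f hf
      rcases (hP0 f).eq_or_lt with h0 | h0
      · simp [← h0]
      · have h4 := Real.log_le_log h0 (not_le.1 (Finset.mem_filter.1 hf).2).le
        rw [Real.log_exp] at h4
        rw [Real.negMulLog]
        nlinarith
    calc δ * b * n = δ * (b * n) := by ring
      _ ≤ (∑ f ∈ Finset.univ.filter (fun f => ¬ Real.exp (-(b * n)) ≤ P f), P f) * (b * n) :=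
        mul_le_mul_of_nonneg_right h1 (by positivity)
      _ ≤ ∑ f ∈ Finset.univ.filter (fun f => ¬ Real.exp (-(b * n)) ≤ P f),
          Real.negMulLog (P f) := by
        rw [Finset.sum_mul]
        exact Finset.sum_le_sum h3
      _ ≤ ∑ f, Real.negMulLog (P f) :=
        Finset.sum_le_sum_of_subset_of_nonneg (Finset.subset_univ _)
          fun f _ _ => Real.negMulLog_nonneg (hP0 f) measureReal_le_one

/-- Positive upper independence density of `U` forces positive entropy for every partition refining
the cover by the complements of the members of `U`. -/
lemma invLimsup_HJoin_pos_of_upperIndepDens_pos (hamen : FolnerAmenable G) {l : ℕ} (hl : 2 ≤ l)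
    {U : Fin l → Set X} (hU : 0 < upperIndepDens G μ U) {r : ℕ} {P : Fin r → Set X}
    (hP : IsMeasPartition P) (hPU : ∀ a, ∃ j, P a ⊆ (U j)ᶜ) :
    0 < invLimsup (fun F : Finset G => HJoin μ P F) := by
  rw [invLimsup_pos_iff hamen (fun F => HJoin_nonneg P F) (fun F => HJoin_le_log_mul_card hP F)]
  obtain ⟨δ, hδ, d, hd, h⟩ := (upperIndepDens_pos_iff hamen).1 hU
  obtain ⟨p, hp, rfl⟩ := hP.exists_labelling
  choose j hj using hPU
  have hl1 : (1 : ℝ) < l := by exact_mod_cast (by omega : 1 < l)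
  have hlog : 0 < Real.log (l / ((l : ℝ) - 1)) := by
    apply Real.log_pos
    rw [lt_div_iff₀ (by linarith)]
    linarith
  set b : ℝ := d * Real.log (l / ((l : ℝ) - 1)) / 2 with hb
  have hb0 : 0 < b := by positivity
  refine ⟨δ * b, by positivity, fun K ε hε => ?_⟩
  obtain ⟨F, hF, hD⟩ := h K ε hε
  refine ⟨F, hF, le_HJoin_of_indep hp hl (fun x hx => hj (p x) rfl hx) hF.1 hd hb0 ?_ hD⟩
  linarith

end IndependenceToEntropy

section HilbertSpace

open Filter Topology

/-- A decreasing sequence of bounded nonempty subsets of a Hilbert space, in which midpoints of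
elements of each set belong to the previous one, admits a convergent selection. -/
lemma exists_tendsto_of_midpoint_mem {H : Type*} [NormedAddCommGroup H] [InnerProductSpace ℝ H]
    [CompleteSpace H] {C : ℕ → Set H} (hanti : Antitone C) (hne : ∀ n, (C n).Nonempty)
    {R : ℝ} (hbdd : ∀ f ∈ C 0, ‖f‖ ≤ R)
    (hmid : ∀ n, ∀ f ∈ C (n + 1), ∀ g ∈ C (n + 1), (2⁻¹ : ℝ) • (f + g) ∈ C n) :
    ∃ f : ℕ → H, (∀ n, f n ∈ C n) ∧ ∃ w, Tendsto f atTop (𝓝 w) := by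
  set e : ℕ → ℝ := fun n => sInf ((fun f => ‖f‖ ^ 2) '' C n) with he
  have hbelow : ∀ n, BddBelow ((fun f : H => ‖f‖ ^ 2) '' C n) := by
    intro n
    refine ⟨0, ?_⟩
    rintro _ ⟨f, -, rfl⟩
    positivity
  have hle : ∀ n, ∀ f ∈ C n, e n ≤ ‖f‖ ^ 2 := fun n f hf => csInf_le (hbelow n) ⟨f, hf, rfl⟩
  have hmono : Monotone e := fun n m hnm =>
    csInf_le_csInf (hbelow n) ((hne m).image _) (image_mono (hanti hnm))
  have hub : ∀ n, e n ≤ R ^ 2 := by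
    intro n
    obtain ⟨f, hf⟩ := hne n
    exact (hle n f hf).trans (pow_le_pow_left₀ (norm_nonneg _) (hbdd f (hanti (Nat.zero_le n) hf)) 2)
  have hbound : BddAbove (range e) := ⟨R ^ 2, by rintro _ ⟨n, rfl⟩; exact hub n⟩
  set L : ℝ := ⨆ n, e n with hL
  have hlim : Tendsto e atTop (𝓝 L) := tendsto_atTop_ciSup hmono hbound
  have heL : ∀ n, e n ≤ L := fun n => le_ciSup hbound n
  have hex : ∀ n : ℕ, ∃ f ∈ C n, ‖f‖ ^ 2 < e n + 1 / ((n : ℝ) + 1) := by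
    intro n
    obtain ⟨_, ⟨f, hf, rfl⟩, h⟩ := exists_lt_of_csInf_lt ((hne n).image fun f : H => ‖f‖ ^ 2)
      (lt_add_of_pos_right (e n) (by positivity : (0 : ℝ) < 1 / ((n : ℝ) + 1)))
    exact ⟨f, hf, h⟩
  choose f hfC hf using hex
  refine ⟨f, hfC, ?_⟩
  set b : ℕ → ℝ := fun n => √(4 * (L - e n) + 4 * (1 / ((n : ℝ) + 1))) with hb
  have hkey : ∀ n m, n ≤ m → ‖f (n + 1) - f (m + 1)‖ ≤ b n := by
    intro n m hnm
    apply Real.le_sqrt_of_sq_le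
    have hp := parallelogram_law_with_norm ℝ (f (n + 1)) (f (m + 1))
    have hm := hle n _ (hmid n _ (hfC (n + 1)) _ (hanti (by omega : n + 1 ≤ m + 1) (hfC (m + 1))))
    rw [norm_smul, mul_pow] at hm
    norm_num at hm
    have h1 := hf (n + 1)
    have h2 := hf (m + 1)
    have h3 : 1 / (((n + 1 : ℕ) : ℝ) + 1) ≤ 1 / ((n : ℝ) + 1) :=
      one_div_le_one_div_of_le (by positivity) (by push_cast; linarith)
    have h4 : 1 / (((m + 1 : ℕ) : ℝ) + 1) ≤ 1 / ((n : ℝ) + 1) := by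
      have : (n : ℝ) ≤ m := by exact_mod_cast hnm
      exact one_div_le_one_div_of_le (by positivity) (by push_cast; linarith)
    have h5 := heL (n + 1)
    have h6 := heL (m + 1)
    nlinarith
  have hb0 : Tendsto b atTop (𝓝 0) := by
    have h1 : Tendsto (fun n => 4 * (L - e n) + 4 * (1 / ((n : ℝ) + 1))) atTop
        (𝓝 (4 * (L - L) + 4 * 0)) :=
      ((tendsto_const_nhds.sub hlim).const_mul 4).add
        (tendsto_one_div_add_atTop_nhds_zero_nat.const_mul 4)
    have h2 := (Real.continuous_sqrt.tendsto _).comp h1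
    simp only [sub_self, mul_zero, add_zero, Real.sqrt_zero] at h2
    exact h2
  have hcau : CauchySeq fun n => f (n + 1) := by
    refine cauchySeq_of_le_tendsto_0' b (fun n m hnm => ?_) hb0
    rw [dist_eq_norm]
    exact hkey n m hnm
  obtain ⟨w, hw⟩ := cauchySeq_tendsto_of_complete hcau
  exact ⟨w, (tendsto_add_atTop_iff_nat 1).1 hw⟩

/-- A version of `exists_tendsto_of_midpoint_mem` for sets of tuples of measurable functions bounded
by `1`, with convergence in mean. -/
lemma exists_tendsto_integral_abs_sub {X : Type*} [MeasurableSpace X] (μ : Measure X)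
    [IsProbabilityMeasure μ] {l : ℕ} {C : ℕ → Set (Fin l → X → ℝ)} (hanti : Antitone C)
    (hne : ∀ n, (C n).Nonempty) (hmeas : ∀ f ∈ C 0, ∀ j, Measurable (f j))
    (hbdd : ∀ f ∈ C 0, ∀ j x, |f j x| ≤ 1)
    (hmid : ∀ n, ∀ f ∈ C (n + 1), ∀ g ∈ C (n + 1), (fun j x => (f j x + g j x) / 2) ∈ C n) :
    ∃ f : ℕ → Fin l → X → ℝ, (∀ n, f n ∈ C n) ∧ ∃ w : Fin l → X → ℝ, (∀ j, Measurable (w j)) ∧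
      (∀ j, Integrable (w j) μ) ∧
      ∀ j, Tendsto (fun n => ∫ x, |f n j x - w j x| ∂μ) atTop (𝓝 0) := by
  set D : ℕ → Set (PiLp 2 fun _ : Fin l => Lp ℝ 2 μ) := fun n =>
    {u | ∃ f ∈ C n, ∀ j, u j =ᵐ[μ] f j} with hD
  have hC0 : ∀ n, C n ⊆ C 0 := fun n => hanti (Nat.zero_le n)
  have hDne : ∀ n, (D n).Nonempty := by
    intro n
    obtain ⟨f, hf⟩ := hne n
    have hmem : ∀ j, MemLp (f j) 2 μ := fun j =>
      MemLp.of_bound (hmeas f (hC0 n hf) j).aestronglyMeasurable 1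
        (Eventually.of_forall fun x => hbdd f (hC0 n hf) j x)
    exact ⟨WithLp.toLp 2 fun j => (hmem j).toLp, f, hf, fun j => (hmem j).coeFn_toLp⟩
  have hDb : ∀ u ∈ D 0, ‖u‖ ≤ √l := by
    rintro u ⟨f, hf, huf⟩
    rw [PiLp.norm_eq_of_L2]
    apply Real.sqrt_le_sqrt
    have h1 : ∀ j, ‖u j‖ ^ 2 ≤ 1 := by
      intro j
      have h2 : ‖u j‖ ≤ 1 := by
        have := Lp.norm_le_of_ae_bound (f := u j) (C := 1) zero_le_one
          (by filter_upwards [huf j] with x hx; rw [hx]; exact hbdd f hf j x)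
        simpa [measureUnivNNReal] using this
      exact pow_le_one₀ (norm_nonneg _) h2
    exact (Finset.sum_le_sum fun j _ => h1 j).trans (by simp)
  obtain ⟨u, huD, W, hW⟩ := exists_tendsto_of_midpoint_mem
    (fun n m hnm u ⟨f, hf, h⟩ => ⟨f, hanti hnm hf, h⟩ : Antitone D) hDne hDb (by
      rintro n u ⟨f, hf, huf⟩ v ⟨g, hg, hvg⟩
      refine ⟨_, hmid n f hf g hg, fun j => ?_⟩
      have h1 := Lp.coeFn_smul (2⁻¹ : ℝ) (u j + v j)
      have h2 := Lp.coeFn_add (u j) (v j)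
      have h3 : ((2⁻¹ : ℝ) • (u + v)) j = (2⁻¹ : ℝ) • (u j + v j) := rfl
      rw [h3]
      filter_upwards [h1, h2, huf j, hvg j] with x h1 h2 h3 h4
      rw [h1, Pi.smul_apply, h2, Pi.add_apply, h3, h4, smul_eq_mul]
      ring)
  choose f hfC hf using huD
  refine ⟨f, hfC, fun j => W j, fun j => (Lp.stronglyMeasurable (W j)).measurable,
    fun j => (Lp.memLp (W j)).integrable one_le_two, fun j => ?_⟩
  have hj : Tendsto (fun n => ‖u n j - W j‖) atTop (𝓝 0) :=
    tendsto_iff_norm_sub_tendsto_zero.1 (((PiLp.continuous_apply 2 _ j).tendsto W).comp hW)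
  refine squeeze_zero (fun n => integral_nonneg fun x => abs_nonneg _) (fun n => ?_) hj
  have h1 : ∫ x, |f n j x - W j x| ∂μ = ∫ x, ‖(u n j - W j) x‖ ∂μ := by
    apply integral_congr_ae
    filter_upwards [Lp.coeFn_sub (u n j) (W j), hf n j] with x h1 h2
    rw [h1, Pi.sub_apply, h2, Real.norm_eq_abs]
  rw [h1, integral_norm_eq_lintegral_enorm (Lp.aestronglyMeasurable _),
    ← eLpNorm_one_eq_lintegral_enorm, Lp.norm_def]
  exact ENNReal.toReal_mono (Lp.eLpNorm_ne_top _)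
    (eLpNorm_le_eLpNorm_of_exponent_le one_le_two (Lp.aestronglyMeasurable _))

end HilbertSpace

section Sampling

/-- The variance of a sum of independent uniform samples of a centred function. -/
lemma sum_sq_sum_sample {R : Type*} [Fintype R] {Z : R → ℝ} (hZ : ∑ r, Z r = 0) (q : ℕ) :
    (∑ ρ : Fin q → R, (∑ i, Z (ρ i)) ^ 2) * Fintype.card R
      = q * (Fintype.card R : ℝ) ^ q * ∑ r, Z r ^ 2 := by
  induction q with
  | zero => simp
  | succ q ih =>
    have h1 : ∑ ρ : Fin (q + 1) → R, (∑ i, Z (ρ i)) ^ 2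
        = ∑ a, ∑ ρ : Fin q → R, (Z a + ∑ i, Z (ρ i)) ^ 2 := by
      rw [← Fintype.sum_prod_type', ← (Fin.consEquiv fun _ : Fin (q + 1) => R).sum_comp]
      refine Finset.sum_congr rfl fun x _ => ?_
      simp [Fin.sum_univ_succ, Fin.consEquiv]
    have h2 : ∀ a, ∑ ρ : Fin q → R, (Z a + ∑ i, Z (ρ i)) ^ 2
        = (Fintype.card R : ℝ) ^ q * Z a ^ 2 + 2 * Z a * (∑ ρ : Fin q → R, ∑ i, Z (ρ i))
          + ∑ ρ : Fin q → R, (∑ i, Z (ρ i)) ^ 2 := by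
      intro a
      simp only [add_sq, Finset.sum_add_distrib, ← Finset.mul_sum]
      simp
    rw [h1]
    simp only [h2, Finset.sum_add_distrib, ← Finset.mul_sum, ← Finset.sum_mul, hZ]
    simp only [Finset.sum_const, Finset.card_univ, nsmul_eq_mul]
    push_cast
    linear_combination (Fintype.card R : ℝ) * ih

/-- The mean absolute error of the empirical mean of `q` uniform samples. -/
lemma sum_abs_sub_sample_mean_le {R : Type*} [Fintype R] [Nonempty R] {Y : R → ℝ} {a B : ℝ}
    (hY : ∑ r, Y r = a * Fintype.card R) (hY2 : ∑ r, Y r ^ 2 ≤ B * Fintype.card R) {q m : ℕ}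
    (hq : 0 < q) (hm : 0 < m) (hB : B * (m : ℝ) ^ 2 ≤ q) :
    ∑ ρ : Fin q → R, |a - (q : ℝ)⁻¹ * ∑ i, Y (ρ i)| ≤ (m : ℝ)⁻¹ * (Fintype.card R : ℝ) ^ q := by
  have hR : (0 : ℝ) < Fintype.card R := by exact_mod_cast Fintype.card_pos
  have hq' : (0 : ℝ) < q := by exact_mod_cast hq
  have hm' : (0 : ℝ) < m := by exact_mod_cast hm
  set n : ℝ := (Fintype.card R : ℝ) with hn
  have hZ : ∑ r, (Y r - a) = 0 := by
    rw [Finset.sum_sub_distrib, hY]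
    simp [hn, mul_comm]
  have hvar := sum_sq_sum_sample hZ q
  have hV : ∑ r, (Y r - a) ^ 2 ≤ B * n := by
    have h1 : ∑ r, (Y r - a) ^ 2 = ∑ r, Y r ^ 2 - a ^ 2 * n := by
      have h2 : ∀ r, (Y r - a) ^ 2 = Y r ^ 2 - 2 * a * Y r + a ^ 2 := fun r => by ring
      simp only [h2, Finset.sum_add_distrib, Finset.sum_sub_distrib, ← Finset.mul_sum, hY]
      simp only [Finset.sum_const, Finset.card_univ, nsmul_eq_mul]
      ring
    rw [h1]
    nlinarith [mul_nonneg (sq_nonneg a) hR.le]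
  have hS : ∑ ρ : Fin q → R, (∑ i, (Y (ρ i) - a)) ^ 2 ≤ q * n ^ q * B := by
    have h1 : (q * n ^ q) * ∑ r, (Y r - a) ^ 2 ≤ (q * n ^ q) * (B * n) :=
      mul_le_mul_of_nonneg_left hV (by positivity)
    rw [← hvar] at h1
    exact le_of_mul_le_mul_right (by linarith) hR
  have hpt : ∀ ρ : Fin q → R, |a - (q : ℝ)⁻¹ * ∑ i, Y (ρ i)|
      ≤ (m : ℝ) / (2 * q ^ 2) * (∑ i, (Y (ρ i) - a)) ^ 2 + (m : ℝ)⁻¹ / 2 := by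
    intro ρ
    have h1 : a - (q : ℝ)⁻¹ * ∑ i, Y (ρ i) = -((q : ℝ)⁻¹ * ∑ i, (Y (ρ i) - a)) := by
      rw [Finset.sum_sub_distrib]
      simp only [Finset.sum_const, Finset.card_univ, Fintype.card_fin, nsmul_eq_mul]
      field_simp
      ring
    rw [h1, abs_neg]
    set d : ℝ := (q : ℝ)⁻¹ * ∑ i, (Y (ρ i) - a) with hd
    have h2 : (m : ℝ) / (2 * q ^ 2) * (∑ i, (Y (ρ i) - a)) ^ 2 = m * |d| ^ 2 / 2 := by
      rw [sq_abs, hd]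
      field_simp
    rw [h2]
    have h3 : m * |d| ^ 2 / 2 + (m : ℝ)⁻¹ / 2 - |d| = (m : ℝ)⁻¹ / 2 * (m * |d| - 1) ^ 2 := by
      field_simp
      ring
    nlinarith [mul_nonneg (by positivity : 0 ≤ (m : ℝ)⁻¹ / 2) (sq_nonneg (m * |d| - 1))]
  refine (Finset.sum_le_sum fun ρ _ => hpt ρ).trans ?_
  rw [Finset.sum_add_distrib, ← Finset.mul_sum]
  simp only [Finset.sum_const, Finset.card_univ, nsmul_eq_mul, Fintype.card_fun, Fintype.card_fin]
  push_cast
  have h1 : (m : ℝ) / (2 * q ^ 2) * ∑ ρ : Fin q → R, (∑ i, (Y (ρ i) - a)) ^ 2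
      ≤ (m : ℝ) / (2 * q ^ 2) * (q * n ^ q * B) := mul_le_mul_of_nonneg_left hS (by positivity)
  have h2 : (m : ℝ) / (2 * q ^ 2) * (q * n ^ q * B) = (n ^ q / (2 * m * q)) * (B * m ^ 2) := by
    field_simp
  have h3 : (n ^ q / (2 * m * q)) * (B * m ^ 2) ≤ (n ^ q / (2 * m * q)) * q :=
    mul_le_mul_of_nonneg_left hB (by positivity)
  have h4 : (n ^ q / (2 * m * q)) * q = (m : ℝ)⁻¹ / 2 * n ^ q := by
    field_simp
  linarith

end Sampling

section ApproxCode

variable {G X : Type*} [Group G] [MulAction G X]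

/-- The orbit of the tuple of functions `f` is described in mean up to `ε` along all sufficiently
invariant finite sets by measurable codes with exponential rate at most `c`. -/
def ApproxCode (G : Type*) {X : Type*} [Group G] [MulAction G X] [MeasurableSpace X]
    (μ : Measure X) {l : ℕ} (f : Fin l → X → ℝ) (ε c : ℝ) : Prop :=
  ∃ (K : Finset G) (δ : ℝ), 0 < δ ∧ ∀ E : Finset G, FolnerInv K δ E →
    ∃ (N : ℕ) (Φ : X → Fin N) (τ : Fin N → G → Fin l → ℝ), Measurable Φ ∧
      (N : ℝ) ≤ Real.exp (c * E.card) ∧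
      ∑ t ∈ E, ∑ j, ∫ x, |f j (t • x) - τ (Φ x) t j| ∂μ ≤ ε * E.card

lemma ApproxCode.mono [MeasurableSpace X] {μ : Measure X} {l : ℕ} {f : Fin l → X → ℝ} {ε ε' c c' : ℝ}
    (h : ApproxCode G μ f ε c) (hε : ε ≤ ε') (hc : c ≤ c') : ApproxCode G μ f ε' c' := by
  obtain ⟨K, δ, hδ, h⟩ := h
  refine ⟨K, δ, hδ, fun E hE => ?_⟩
  obtain ⟨N, Φ, τ, hΦ, hN, herr⟩ := h E hE
  refine ⟨N, Φ, τ, hΦ, hN.trans ?_, herr.trans ?_⟩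
  · gcongr
  · gcongr

/-- The tuple of frequencies of the letters predicted at a point by the translates of the code
`Φ`, `τ` on the tile `F`. -/
noncomputable def tileAverage (F : Finset G) {l N : ℕ} (Φ : X → Fin N) (τ : Fin N → G → Fin l)
    (j : Fin l) (x : X) : ℝ :=
  (F.card : ℝ)⁻¹ * ∑ s ∈ F, if τ (Φ (s⁻¹ • x)) s = j then 1 else 0

lemma tileAverage_nonneg (F : Finset G) {l N : ℕ} (Φ : X → Fin N) (τ : Fin N → G → Fin l)
    (j : Fin l) (x : X) : 0 ≤ tileAverage F Φ τ j x :=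
  mul_nonneg (by positivity) (Finset.sum_nonneg fun s _ => by split_ifs <;> norm_num)

lemma tileAverage_le_one (F : Finset G) {l N : ℕ} (Φ : X → Fin N) (τ : Fin N → G → Fin l)
    (j : Fin l) (x : X) : tileAverage F Φ τ j x ≤ 1 := by
  have h : (∑ s ∈ F, if τ (Φ (s⁻¹ • x)) s = j then (1 : ℝ) else 0) ≤ F.card := by
    rw [← nsmul_one, ← Finset.sum_const]
    exact Finset.sum_le_sum fun s _ => by split_ifs <;> norm_num
  exact inv_mul_le_one_of_le₀ h (by positivity)

lemma sum_tileAverage {F : Finset G} (hF : F.Nonempty) {l N : ℕ} (Φ : X → Fin N)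
    (τ : Fin N → G → Fin l) (x : X) : ∑ j, tileAverage F Φ τ j x = 1 := by
  have hn : (F.card : ℝ) ≠ 0 := by exact_mod_cast hF.card_pos.ne'
  simp only [tileAverage, ← Finset.mul_sum]
  rw [Finset.sum_comm]
  simp [hn]

variable [MeasurableSpace X] [MeasurableConstSMul G X] {l : ℕ}

lemma measurable_tileAverage (F : Finset G) {N : ℕ} {Φ : X → Fin N} (hΦ : Measurable Φ)
    (τ : Fin N → G → Fin l) (j : Fin l) : Measurable (tileAverage F Φ τ j) := by
  refine Measurable.const_mul (Finset.measurable_fun_sum _ fun s _ => ?_) _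
  exact (measurable_of_countable fun i => if τ i s = j then (1 : ℝ) else 0).comp
    (hΦ.comp (measurable_const_smul s⁻¹))

variable {μ : Measure X} [IsProbabilityMeasure μ] [SMulInvariantMeasure G X μ]

lemma integrable_smul_sub_code {f : X → ℝ} (hf : Integrable f μ) (t : G) {N : ℕ} {Φ : X → Fin N}
    (hΦ : Measurable Φ) (v : Fin N → ℝ) : Integrable (fun x => |f (t • x) - v (Φ x)|) μ := by
  have h1 : Integrable (fun x => f (t • x)) μ :=
    (measurePreserving_smul t μ).integrable_comp_of_integrable hf
  have h2 : Integrable (fun x => v (Φ x)) μ := by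
    refine Integrable.of_bound ((measurable_of_countable v).comp hΦ).aestronglyMeasurable
      (∑ i, ‖v i‖) (Filter.Eventually.of_forall fun x => ?_)
    exact Finset.single_le_sum (f := fun i => ‖v i‖) (fun i _ => norm_nonneg _)
      (Finset.mem_univ (Φ x))
  exact (h1.sub h2).abs

lemma ApproxCode.midpoint {f g : Fin l → X → ℝ} {ε ε' c c' : ℝ}
    (hfi : ∀ j, Integrable (f j) μ) (hgi : ∀ j, Integrable (g j) μ)
    (hf : ApproxCode G μ f ε c) (hg : ApproxCode G μ g ε' c') :
    ApproxCode G μ (fun j x => (f j x + g j x) / 2) ((ε + ε') / 2) (c + c') := by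
  obtain ⟨K, δ, hδ, hf⟩ := hf
  obtain ⟨K', δ', hδ', hg⟩ := hg
  refine ⟨K ∪ K', min δ δ', lt_min hδ hδ', fun E hE => ?_⟩
  obtain ⟨N, Φ, τ, hΦ, hN, herr⟩ :=
    hf E (hE.mono Finset.subset_union_left (min_le_left _ _))
  obtain ⟨N', Φ', τ', hΦ', hN', herr'⟩ :=
    hg E (hE.mono Finset.subset_union_right (min_le_right _ _))
  refine ⟨N * N', fun x => finProdFinEquiv (Φ x, Φ' x), fun i t j =>
    (τ (finProdFinEquiv.symm i).1 t j + τ' (finProdFinEquiv.symm i).2 t j) / 2,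
    (measurable_of_countable finProdFinEquiv).comp (hΦ.prodMk hΦ'), ?_, ?_⟩
  · push_cast
    rw [add_mul, Real.exp_add]
    gcongr
  · have h : ∀ t ∈ E, ∀ j ∈ (Finset.univ : Finset (Fin l)),
        ∫ x, |(f j (t • x) + g j (t • x)) / 2 - (τ (Φ x) t j + τ' (Φ' x) t j) / 2| ∂μ
        ≤ (∫ x, |f j (t • x) - τ (Φ x) t j| ∂μ + ∫ x, |g j (t • x) - τ' (Φ' x) t j| ∂μ) / 2 := by
      intro t _ j _
      have h1 := integrable_smul_sub_code (hfi j) t hΦ (fun i => τ i t j)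
      have h2 := integrable_smul_sub_code (hgi j) t hΦ' (fun i => τ' i t j)
      rw [← integral_add h1 h2, ← integral_div]
      refine integral_mono_of_nonneg (Filter.Eventually.of_forall fun x => abs_nonneg _)
        ((h1.add h2).div_const 2) (Filter.Eventually.of_forall fun x => ?_)
      have h3 : (f j (t • x) + g j (t • x)) / 2 - (τ (Φ x) t j + τ' (Φ' x) t j) / 2
        = ((f j (t • x) - τ (Φ x) t j) + (g j (t • x) - τ' (Φ' x) t j)) / 2 := by ring
      beta_reduce
      rw [h3, abs_div, abs_two]
      gcongr
      exact abs_add_le _ _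
    simp only [Equiv.symm_apply_apply]
    refine (Finset.sum_le_sum fun t ht => Finset.sum_le_sum (h t ht)).trans ?_
    simp only [← Finset.sum_div, Finset.sum_add_distrib]
    linarith

lemma ApproxCode.perturb {f g : Fin l → X → ℝ} {ε c η : ℝ}
    (hfi : ∀ j, Integrable (f j) μ) (hgi : ∀ j, Integrable (g j) μ)
    (hf : ApproxCode G μ f ε c) (hη : ∑ j, ∫ x, |f j x - g j x| ∂μ ≤ η) :
    ApproxCode G μ g (ε + η) c := by
  obtain ⟨K, δ, hδ, hf⟩ := hf
  refine ⟨K, δ, hδ, fun E hE => ?_⟩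
  obtain ⟨N, Φ, τ, hΦ, hN, herr⟩ := hf E hE
  refine ⟨N, Φ, τ, hΦ, hN, ?_⟩
  have h : ∀ t ∈ E, ∀ j ∈ (Finset.univ : Finset (Fin l)),
      ∫ x, |g j (t • x) - τ (Φ x) t j| ∂μ
        ≤ ∫ x, |f j (t • x) - τ (Φ x) t j| ∂μ + ∫ x, |f j x - g j x| ∂μ := by
    intro t _ j _
    have h1 := integrable_smul_sub_code (hfi j) t hΦ (fun i => τ i t j)
    have h2 : Integrable (fun x => |f j x - g j x|) μ := ((hfi j).sub (hgi j)).abs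
    have h3 : Integrable (fun x => |f j (t • x) - g j (t • x)|) μ :=
      (measurePreserving_smul t μ).integrable_comp_of_integrable h2
    have h4 : ∫ x, |f j x - g j x| ∂μ = ∫ x, |f j (t • x) - g j (t • x)| ∂μ :=
      ((measurePreserving_smul t μ).integral_comp (measurableEmbedding_const_smul t) _).symm
    rw [h4, ← integral_add h1 h3]
    refine integral_mono_of_nonneg (Filter.Eventually.of_forall fun x => abs_nonneg _)
      (h1.add h3) (Filter.Eventually.of_forall fun x => ?_)
    have h5 := abs_sub_le (g j (t • x)) (f j (t • x)) (τ (Φ x) t j)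
    rw [abs_sub_comm (g j (t • x)) (f j (t • x))] at h5
    beta_reduce
    linarith
  refine (Finset.sum_le_sum fun t ht => Finset.sum_le_sum (h t ht)).trans ?_
  simp only [Finset.sum_add_distrib, Finset.sum_const, nsmul_eq_mul]
  have := mul_le_mul_of_nonneg_left hη (Nat.cast_nonneg E.card : (0 : ℝ) ≤ E.card)
  linarith

end ApproxCode

section TileAverageCode

variable {G X : Type*} [Group G] [MulAction G X] {l : ℕ}

/-- The contribution of the tile placed at `r` to the frequency of the letter `j` at `t`, when the
tile at `r` carries the code `i`. -/
noncomputable def tileVote (F : Finset G) {N : ℕ} (τ : Fin N → G → Fin l) (j : Fin l) (t r : G)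
    (i : Fin N) : ℝ :=
  if t * r⁻¹ ∈ F ∧ τ i (t * r⁻¹) = j then 1 else 0

lemma sum_tileVote {F E : Finset G} (hF : F.Nonempty) {N : ℕ} (Φ : X → Fin N)
    (τ : Fin N → G → Fin l) (j : Fin l) {t : G} (ht : ∀ s ∈ F, s⁻¹ * t ∈ E) (x : X) :
    ∑ r ∈ E, tileVote F τ j t r (Φ (r • x)) = F.card * tileAverage F Φ τ j (t • x) := by
  have hn : (F.card : ℝ) ≠ 0 := by exact_mod_cast hF.card_pos.ne'
  rw [tileAverage, mul_inv_cancel_left₀ hn]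
  have hinj : Set.InjOn (fun s : G => s⁻¹ * t) F := fun a _ b _ h => by simpa using h
  have h1 : ∑ r ∈ F.image (fun s => s⁻¹ * t), tileVote F τ j t r (Φ (r • x))
      = ∑ r ∈ E, tileVote F τ j t r (Φ (r • x)) := by
    refine Finset.sum_subset (fun r hr => ?_) fun r _ hr => ?_
    · obtain ⟨s, hs, rfl⟩ := Finset.mem_image.1 hr
      exact ht s hs
    · refine if_neg fun h => hr (Finset.mem_image.2 ⟨t * r⁻¹, h.1, by group⟩)
  rw [← h1, Finset.sum_image hinj]
  refine Finset.sum_congr rfl fun s hs => ?_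
  have h2 : t * (s⁻¹ * t)⁻¹ = s := by group
  simp only [tileVote, h2, hs, true_and, mul_smul]

variable [MeasurableSpace X] [MeasurableConstSMul G X] {μ : Measure X} [IsProbabilityMeasure μ]
  [SMulInvariantMeasure G X μ]

/-- Tile averages are approximately coded by a bounded number of random samples per tile volume. -/
lemma approxCode_tileAverage {F : Finset G} (hF : F.Nonempty) {N : ℕ} {Φ : X → Fin N}
    (hΦ : Measurable Φ) (τ : Fin N → G → Fin l) {c : ℝ} (hc : 0 ≤ c)
    (hN : (N : ℝ) ≤ Real.exp (c * F.card)) {m : ℕ} (hm : 0 < m) :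
    ApproxCode G μ (tileAverage F Φ τ) (2 * l / m) (((m : ℝ) ^ 2 + 1) * c) := by
  have hm' : (1 : ℝ) ≤ m := by exact_mod_cast hm
  have hn : (0 : ℝ) < F.card := by exact_mod_cast hF.card_pos
  refine ⟨F.image fun s => s⁻¹, (2 * (m : ℝ))⁻¹, by positivity, fun E hE => ?_⟩
  have hEn : (0 : ℝ) < E.card := by exact_mod_cast hE.1.card_pos
  set E' : Finset G := E.filter fun t => ∀ s ∈ F, s⁻¹ * t ∈ E with hE'
  have hE'card : (1 - (2 * (m : ℝ))⁻¹) * E.card ≤ E'.card := by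
    refine hE.2.trans ?_
    rw [← Set.ncard_coe_finset]
    refine Nat.cast_le.2 (Set.ncard_le_ncard (fun t ht => ?_) (Finset.finite_toSet _))
    have h1 : ∀ s ∈ F, s⁻¹ * t ∈ E := fun s hs => ht.2 _ (Finset.mem_image_of_mem _ hs)
    simpa [hE'] using And.intro ht.1 h1
  have hhalf : (2 * (m : ℝ))⁻¹ ≤ 1 / 2 := by
    rw [mul_inv, one_div]
    exact mul_le_of_le_one_right (by norm_num) (inv_le_one_of_one_le₀ hm')
  have hFE : (F.card : ℝ) ≤ E.card := by
    have hpos : (0 : ℝ) < E'.card := lt_of_lt_of_le (mul_pos (by linarith) hEn) hE'card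
    obtain ⟨t, ht⟩ : E'.Nonempty := Finset.card_pos.1 (by exact_mod_cast hpos)
    have hinj : Set.InjOn (fun s : G => s⁻¹ * t) F := fun a _ b _ h => by simpa using h
    exact_mod_cast Finset.card_le_card_of_injOn _ (Finset.mem_filter.1 ht).2 hinj
  set q : ℕ := ⌈(m : ℝ) ^ 2 * (E.card / F.card)⌉₊ with hq
  have hqpos : 0 < q := Nat.ceil_pos.2 (by positivity)
  have hq' : (0 : ℝ) < q := by exact_mod_cast hqpos
  have hqge : (E.card / F.card : ℝ) * (m : ℝ) ^ 2 ≤ q := by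
    rw [mul_comm]
    exact Nat.le_ceil _
  have hqle : (F.card : ℝ) * q ≤ ((m : ℝ) ^ 2 + 1) * E.card := by
    have h1 : (q : ℝ) ≤ (m : ℝ) ^ 2 * (E.card / F.card) + 1 :=
      (Nat.ceil_lt_add_one (by positivity)).le
    have h2 := mul_le_mul_of_nonneg_left h1 hn.le
    have h3 : (F.card : ℝ) * ((m : ℝ) ^ 2 * (E.card / F.card) + 1)
      = (m : ℝ) ^ 2 * E.card + F.card := by field_simp
    linarith
  set val : (Fin q → ↥E) → (Fin q → Fin N) → G → Fin l → ℝ := fun ρ w t j =>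
    if t ∈ E' then (q : ℝ)⁻¹ * ∑ i, (E.card / F.card : ℝ) * tileVote F τ j t (ρ i) (w i) else 0
    with hval
  set code : (Fin q → ↥E) → X → Fin (N ^ q) := fun ρ x =>
    finFunctionFinEquiv fun i => Φ ((ρ i : G) • x) with hcode
  have hcodem : ∀ ρ, Measurable (code ρ) := fun ρ =>
    (measurable_of_countable finFunctionFinEquiv).comp
      (measurable_pi_lambda _ fun i => hΦ.comp (measurable_const_smul _))
  have hfi : ∀ j, Integrable (tileAverage F Φ τ j) μ := fun j =>
    Integrable.of_bound (measurable_tileAverage F hΦ τ j).aestronglyMeasurable 1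
      (Filter.Eventually.of_forall fun x => by
        rw [Real.norm_eq_abs, abs_of_nonneg (tileAverage_nonneg F Φ τ j x)]
        exact tileAverage_le_one F Φ τ j x)
  set err : (Fin q → ↥E) → G → Fin l → X → ℝ := fun ρ t j x =>
    |tileAverage F Φ τ j (t • x) - val ρ (finFunctionFinEquiv.symm (code ρ x)) t j| with herr
  have hint : ∀ ρ t j, Integrable (err ρ t j) μ := fun ρ t j =>
    integrable_smul_sub_code (hfi j) t (hcodem ρ) fun i => val ρ (finFunctionFinEquiv.symm i) t j
  have : Nonempty ↥E := hE.1.coe_sort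
  have hcardE : Fintype.card ↥E = E.card := Fintype.card_coe E
  have hgood : ∀ t ∈ E', ∀ j x, ∑ ρ, err ρ t j x ≤ (m : ℝ)⁻¹ * (E.card : ℝ) ^ q := by
    intro t ht j x
    have hs := sum_tileVote hF Φ τ j (Finset.mem_filter.1 ht).2 x
    rw [← Finset.sum_coe_sort] at hs
    have h1 := sum_abs_sub_sample_mean_le (R := ↥E)
      (Y := fun r => (E.card / F.card : ℝ) * tileVote F τ j t r (Φ ((r : G) • x)))
      (a := tileAverage F Φ τ j (t • x)) (B := E.card / F.card) (q := q) (m := m)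
      (by
        rw [← Finset.mul_sum, hs, hcardE]
        field_simp)
      (by
        have h2 : ∀ r : ↥E, ((E.card / F.card : ℝ) * tileVote F τ j t r (Φ ((r : G) • x))) ^ 2
            = (E.card / F.card : ℝ) ^ 2 * tileVote F τ j t r (Φ ((r : G) • x)) := by
          intro r
          rw [mul_pow, tileVote]
          split_ifs <;> simp
        simp only [h2]
        rw [← Finset.mul_sum, hs, hcardE]
        have h3 : (E.card / F.card : ℝ) ^ 2 * (F.card * tileAverage F Φ τ j (t • x))
          = E.card / F.card * E.card * tileAverage F Φ τ j (t • x) := by field_simp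
        rw [h3]
        exact mul_le_of_le_one_right (by positivity) (tileAverage_le_one F Φ τ j _))
      hqpos hm hqge
    rw [hcardE] at h1
    refine le_trans (le_of_eq ?_) h1
    refine Finset.sum_congr rfl fun ρ _ => ?_
    simp only [herr, hval, hcode, Equiv.symm_apply_apply, if_pos ht]
  have hbad : ∀ t ∉ E', ∀ j x, ∑ ρ, err ρ t j x ≤ (E.card : ℝ) ^ q := by
    intro t ht j x
    have h1 : ∀ ρ, err ρ t j x ≤ 1 := by
      intro ρ
      simp only [herr, hval, if_neg ht, sub_zero]
      rw [abs_of_nonneg (tileAverage_nonneg F Φ τ j _)]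
      exact tileAverage_le_one F Φ τ j _
    refine (Finset.sum_le_sum fun ρ _ => h1 ρ).trans ?_
    simp
  have hbound : ∀ t j, ∑ ρ, ∫ x, err ρ t j x ∂μ
      ≤ (if t ∈ E' then (m : ℝ)⁻¹ else 1) * (E.card : ℝ) ^ q := by
    intro t j
    rw [← integral_finsetSum _ fun ρ _ => hint ρ t j]
    have h1 : ∀ x, ∑ ρ, err ρ t j x ≤ (if t ∈ E' then (m : ℝ)⁻¹ else 1) * (E.card : ℝ) ^ q := by
      intro x
      split_ifs with ht
      · exact hgood t ht j x
      · rw [one_mul]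
        exact hbad t ht j x
    have h2 := integral_mono (μ := μ) (integrable_finsetSum Finset.univ fun ρ _ => hint ρ t j)
      (integrable_const _) h1
    simpa using h2
  have hsum : ∑ t ∈ E, (if t ∈ E' then (m : ℝ)⁻¹ else 1) ≤ 2 / m * E.card := by
    have h0 : E' ⊆ E := Finset.filter_subset _ _
    have h1 : ∑ t ∈ E, (if t ∈ E' then (m : ℝ)⁻¹ else 1)
        = E'.card * (m : ℝ)⁻¹ + (E.card - E'.card) := by
      have ha : ∑ t ∈ E', (if t ∈ E' then (m : ℝ)⁻¹ else 1) = E'.card * (m : ℝ)⁻¹ := by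
        rw [Finset.sum_congr rfl fun t ht => if_pos ht, Finset.sum_const, nsmul_eq_mul]
      have hb : ∑ t ∈ E \ E', (if t ∈ E' then (m : ℝ)⁻¹ else 1) = E.card - E'.card := by
        rw [Finset.sum_congr rfl fun t ht => if_neg (Finset.mem_sdiff.1 ht).2, Finset.sum_const,
          nsmul_eq_mul, mul_one, Finset.cast_card_sdiff h0]
      rw [← Finset.sum_sdiff h0, ha, hb, add_comm]
    have h2 : (E'.card : ℝ) ≤ E.card := by exact_mod_cast Finset.card_le_card h0
    have h3 := mul_le_mul_of_nonneg_right h2 (by positivity : (0 : ℝ) ≤ (m : ℝ)⁻¹)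
    have h4 : (2 * (m : ℝ))⁻¹ = (m : ℝ)⁻¹ / 2 := by rw [mul_inv]; ring
    have h5 : 0 ≤ (m : ℝ)⁻¹ * E.card := by positivity
    rw [h1, div_eq_mul_inv]
    rw [h4] at hE'card
    linarith
  have htotal : ∑ ρ, ∑ t ∈ E, ∑ j, ∫ x, err ρ t j x ∂μ
      ≤ ∑ _ρ : Fin q → ↥E, 2 * l / m * (E.card : ℝ) := by
    rw [Finset.sum_comm]
    have h1 : ∀ t ∈ E, ∑ ρ, ∑ j, ∫ x, err ρ t j x ∂μ
        ≤ (if t ∈ E' then (m : ℝ)⁻¹ else 1) * (l * (E.card : ℝ) ^ q) := by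
      intro t _
      rw [Finset.sum_comm]
      refine (Finset.sum_le_sum fun j _ => hbound t j).trans (le_of_eq ?_)
      simp only [Finset.sum_const, Finset.card_univ, Fintype.card_fin, nsmul_eq_mul]
      ring
    refine (Finset.sum_le_sum h1).trans ?_
    rw [← Finset.sum_mul]
    refine (mul_le_mul_of_nonneg_right hsum (by positivity)).trans (le_of_eq ?_)
    simp only [Finset.sum_const, Finset.card_univ, Fintype.card_fun, Fintype.card_fin, hcardE,
      nsmul_eq_mul]
    push_cast
    ring
  obtain ⟨ρ, -, hρ⟩ := Finset.exists_le_of_sum_le Finset.univ_nonempty htotal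
  refine ⟨N ^ q, code ρ, fun i => val ρ (finFunctionFinEquiv.symm i), hcodem ρ, ?_, hρ⟩
  push_cast
  refine (pow_le_pow_left₀ (by positivity) hN q).trans ?_
  rw [← Real.exp_nat_mul]
  apply Real.exp_le_exp.2
  have := mul_le_mul_of_nonneg_left hqle hc
  linarith

end TileAverageCode

section AvoidingCode

open Filter Topology

/-- A measurable selection from finitely many measurable sets. -/
lemma exists_measurable_selection {X : Type*} [MeasurableSpace X] {N : ℕ} (hN : 0 < N)
    {A : Fin N → Set X} (hA : ∀ i, MeasurableSet (A i)) :
    ∃ Φ : X → Fin N, Measurable Φ ∧ (∀ x i, x ∈ A i → x ∈ A (Φ x)) ∧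
      ∀ x y, (∀ i, x ∈ A i ↔ y ∈ A i) → Φ x = Φ y := by
  set p : ℕ → X → Prop := fun n x => ∀ h : n < N, x ∈ A ⟨n, h⟩ with hp
  have hex : ∀ x, ∃ n, p n x := fun x => ⟨N, fun h => absurd h (lt_irrefl N)⟩
  set v : ℕ → Fin N := fun n => if h : n < N then ⟨n, h⟩ else ⟨0, hN⟩ with hv
  refine ⟨fun x => v (Nat.find (hex x)),
    Measurable.find (f := fun n _ => v n) (fun n => measurable_const) (fun n => ?_) hex,
    fun x i hi => ?_, fun x y hxy => ?_⟩
  · by_cases h : n < N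
    · simpa [hp, h] using hA ⟨n, h⟩
    · simp [hp, h]
  · have hlt : Nat.find (hex x) < N := (Nat.find_min' (hex x) fun _ => hi).trans_lt i.2
    have h := Nat.find_spec (hex x) hlt
    simpa only [hv, dif_pos hlt] using h
  · have h : ∀ n, p n x ↔ p n y := fun n => forall_congr' fun h => hxy ⟨n, h⟩
    exact congrArg v (Nat.find_congr' fun {n} => h n)

variable {G X : Type*} [Group G] [MulAction G X] [MeasurableSpace X] [MeasurableConstSMul G X]
  {μ : Measure X} [IsProbabilityMeasure μ] {l : ℕ} {U : Fin l → Set X}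

/-- If `U` has zero upper independence density, then there are tiles on which names avoiding `U`
can be chosen measurably, on a set of large measure, from a family of small exponential size. -/
lemma exists_avoiding_code (hamen : FolnerAmenable G) (hl : 2 ≤ l) (hUm : ∀ j, MeasurableSet (U j))
    (hUd : Pairwise fun i j => Disjoint (U i) (U j)) (hU : ¬ 0 < upperIndepDens G μ U)
    {δ c : ℝ} (hδ : 0 < δ) (hδ1 : δ < 1) (hc : 0 < c) :
    ∃ F : Finset G, F.Nonempty ∧ ∃ D : Set X, MeasurableSet D ∧ 1 - δ ≤ μ.real D ∧
      ∃ (N : ℕ) (Φ : X → Fin N) (τ : Fin N → G → Fin l), Measurable Φ ∧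
        (N : ℝ) ≤ Real.exp (c * F.card) ∧ ∀ x ∈ D, ∀ s ∈ F, s • x ∉ U (τ (Φ x) s) := by
  obtain ⟨η, hη, hcover⟩ := exists_avoiding_cover_exp hl hc
  rw [upperIndepDens_pos_iff hamen] at hU
  push Not at hU
  obtain ⟨K, ε, hε, hF⟩ := hU δ hδ η hη
  obtain ⟨F, hFK⟩ := hamen K ε hε
  obtain ⟨D, hD, hμD, hJ⟩ := hF F hFK
  set ω : X → G → Option (Fin l) := fun x s =>
    if h : ∃ j, s • x ∈ U j then some h.choose else none with hω
  have hω1 : ∀ x s j, s • x ∈ U j → ω x s = some j := by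
    intro x s j h
    have hex : ∃ j, s • x ∈ U j := ⟨j, h⟩
    simp only [hω, dif_pos hex, Option.some.injEq]
    by_contra hne
    exact Set.disjoint_left.1 (hUd hne) hex.choose_spec h
  have hω2 : ∀ x s j, ω x s = some j → s • x ∈ U j := by
    intro x s j h
    by_cases hex : ∃ j, s • x ∈ U j
    · simp only [hω, dif_pos hex, Option.some.injEq] at h
      exact h ▸ hex.choose_spec
    · simp [hω, dif_neg hex] at h
  obtain ⟨T, hT, hTcard⟩ := hcover F (ω '' D) (by
    intro J hJF hsh
    rcases J.eq_empty_or_nonempty with rfl | hne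
    · simp only [Finset.card_empty, Nat.cast_zero]
      positivity
    · refine (hJ J hJF fun F' hF' hF'ne σ => ?_).le
      obtain ⟨_, ⟨x, hx, rfl⟩, h⟩ := hsh σ
      exact ⟨x, mem_iInter₂.2 fun s hs => ⟨hx, hω2 x s _ (h s (by exact_mod_cast hF' hs))⟩⟩)
  have hDne : D.Nonempty := by
    by_contra h
    rw [not_nonempty_iff_eq_empty] at h
    rw [h] at hμD
    simp only [measure_empty, ENNReal.toReal_zero] at hμD
    linarith
  have hTpos : 0 < T.card := by
    obtain ⟨x, hx⟩ := hDne
    obtain ⟨τ, hτ, -⟩ := hT _ ⟨x, hx, rfl⟩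
    exact Finset.card_pos.2 ⟨τ, hτ⟩
  obtain ⟨Φ, hΦ, hsel, -⟩ := exists_measurable_selection hTpos
    (A := fun i => ⋂ s ∈ F, {x : X | s • x ∈ (U ((T.equivFin.symm i : G → Fin l) s))ᶜ})
    (fun i => Finset.measurableSet_biInter _ fun s _ =>
      measurable_const_smul s (hUm _).compl)
  refine ⟨F, hFK.1, D, hD, hμD, T.card, Φ, fun i => T.equivFin.symm i, hΦ, hTcard,
    fun x hx s hs => ?_⟩
  obtain ⟨τ, hτ, hav⟩ := hT _ ⟨x, hx, rfl⟩
  have h := hsel x (T.equivFin ⟨τ, hτ⟩) (by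
    simp only [Equiv.symm_apply_apply]
    exact mem_iInter₂.2 fun s hs h => hav s hs (hω1 x s _ h))
  exact mem_iInter₂.1 h s hs

lemma setIntegral_tileAverage_le [SMulInvariantMeasure G X μ] (hUm : ∀ j, MeasurableSet (U j))
    {F : Finset G} (hF : F.Nonempty) {D : Set X} (hD : MeasurableSet D) {δ : ℝ}
    (hμD : 1 - δ ≤ μ.real D) {N : ℕ} {Φ : X → Fin N} {τ : Fin N → G → Fin l}
    (hav : ∀ x ∈ D, ∀ s ∈ F, s • x ∉ U (τ (Φ x) s)) (j : Fin l) :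
    ∫ x in U j, tileAverage F Φ τ j x ∂μ ≤ δ := by
  have hn : (F.card : ℝ) ≠ 0 := by exact_mod_cast hF.card_pos.ne'
  have hi : Integrable (Dᶜ.indicator (1 : X → ℝ)) μ :=
    (integrable_const (1 : ℝ)).indicator hD.compl
  have hi' : ∀ s : G, Integrable (fun x => Dᶜ.indicator (1 : X → ℝ) (s⁻¹ • x)) μ := fun s =>
    (measurePreserving_smul s⁻¹ μ).integrable_comp_of_integrable hi
  have hs : ∀ s : G, ∫ x, Dᶜ.indicator (1 : X → ℝ) (s⁻¹ • x) ∂μ = μ.real Dᶜ := by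
    intro s
    rw [(measurePreserving_smul s⁻¹ μ).integral_comp (measurableEmbedding_const_smul s⁻¹)
      (Dᶜ.indicator 1), integral_indicator_one hD.compl]
  have hDc : μ.real Dᶜ ≤ δ := by
    rw [probReal_compl_eq_one_sub hD]
    linarith
  rw [← integral_indicator (hUm j)]
  calc ∫ x, (U j).indicator (tileAverage F Φ τ j) x ∂μ
      ≤ ∫ x, (F.card : ℝ)⁻¹ * ∑ s ∈ F, Dᶜ.indicator (1 : X → ℝ) (s⁻¹ • x) ∂μ := by
        refine integral_mono_of_nonneg (Eventually.of_forall fun x =>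
          indicator_nonneg (fun x _ => tileAverage_nonneg F Φ τ j x) x)
          ((integrable_finsetSum _ fun s _ => hi' s).const_mul _) (Eventually.of_forall fun x => ?_)
        beta_reduce
        by_cases hx : x ∈ U j
        · rw [indicator_of_mem hx, tileAverage]
          refine mul_le_mul_of_nonneg_left (Finset.sum_le_sum fun s hs => ?_) (by positivity)
          split_ifs with h
          · have h1 : s⁻¹ • x ∈ Dᶜ := fun hxD => hav _ hxD s hs (by
              rw [h, smul_inv_smul]
              exact hx)
            rw [indicator_of_mem h1, Pi.one_apply]
          · exact indicator_nonneg (fun _ _ => zero_le_one) _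
        · rw [indicator_of_notMem hx]
          exact mul_nonneg (by positivity)
            (Finset.sum_nonneg fun s _ => indicator_nonneg (fun _ _ => zero_le_one) _)
    _ = μ.real Dᶜ := by
        rw [integral_const_mul, integral_finsetSum _ fun s _ => hi' s]
        simp only [hs, Finset.sum_const, nsmul_eq_mul]
        field_simp
    _ ≤ δ := hDc

/-- If `U` has zero upper independence density, there is a partition of unity `w` with `w j`
vanishing on `U j` that has codes of arbitrarily small rate and error. -/
lemma exists_partitionOfUnity_approxCode [SMulInvariantMeasure G X μ] (hamen : FolnerAmenable G)
    (hl : 2 ≤ l) (hUm : ∀ j, MeasurableSet (U j))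
    (hUd : Pairwise fun i j => Disjoint (U i) (U j)) (hU : ¬ 0 < upperIndepDens G μ U) :
    ∃ w : Fin l → X → ℝ, (∀ j, Measurable (w j)) ∧ (∀ j, Integrable (w j) μ) ∧
      (∀ ε > 0, ApproxCode G μ w ε ε) ∧ (∀ᵐ x ∂μ, ∑ j, w j x = 1) ∧
      ∀ j, ∀ᵐ x ∂μ, x ∈ U j → w j x = 0 := by
  have hl0 : (0 : ℝ) < l := by exact_mod_cast (by omega : 0 < l)
  set C : ℕ → Set (Fin l → X → ℝ) := fun n => {f | (∀ j, Measurable (f j)) ∧ (∀ j x, 0 ≤ f j x) ∧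
    (∀ x, ∑ j, f j x = 1) ∧ (∀ j, ∫ x in U j, f j x ∂μ ≤ 2⁻¹ ^ n) ∧
    ApproxCode G μ f (2⁻¹ ^ n) (2⁻¹ ^ n)} with hC
  have hpow : ∀ n m : ℕ, n ≤ m → (2⁻¹ : ℝ) ^ m ≤ 2⁻¹ ^ n := fun n m h =>
    pow_le_pow_of_le_one (by norm_num) (by norm_num) h
  have hanti : Antitone C := by
    rintro n m hnm f ⟨h1, h2, h3, h4, h5⟩
    exact ⟨h1, h2, h3, fun j => (h4 j).trans (hpow n m hnm),
      h5.mono (hpow n m hnm) (hpow n m hnm)⟩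
  have hbdd : ∀ n, ∀ f ∈ C n, ∀ j x, |f j x| ≤ 1 := by
    rintro n f ⟨h1, h2, h3, -, -⟩ j x
    rw [abs_of_nonneg (h2 j x), ← h3 x]
    exact Finset.single_le_sum (f := fun j => f j x) (fun j _ => h2 j x) (Finset.mem_univ j)
  have hint : ∀ n, ∀ f ∈ C n, ∀ j, Integrable (f j) μ := fun n f hf j =>
    Integrable.of_bound (hf.1 j).aestronglyMeasurable 1 (Eventually.of_forall (hbdd n f hf j))
  have hne : ∀ n, (C n).Nonempty := by
    intro n
    have hn : (0 : ℝ) < 2⁻¹ ^ n := by positivity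
    obtain ⟨m, hm⟩ := exists_nat_gt (2 * l / (2⁻¹ : ℝ) ^ n)
    have hm0 : (0 : ℝ) < m := lt_of_le_of_lt (by positivity) hm
    have hm1 : 0 < m := by exact_mod_cast hm0
    set c : ℝ := 2⁻¹ ^ n / ((m : ℝ) ^ 2 + 1) with hc
    have hc0 : 0 < c := by positivity
    have hδ1 : (2⁻¹ : ℝ) ^ (n + 1) < 1 := pow_lt_one₀ (by norm_num) (by norm_num) (by omega)
    obtain ⟨F, hF, D, hD, hμD, N, Φ, τ, hΦ, hN, hav⟩ :=
      exists_avoiding_code hamen hl hUm hUd hU (δ := 2⁻¹ ^ (n + 1)) (by positivity) hδ1 hc0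
    refine ⟨tileAverage F Φ τ, measurable_tileAverage F hΦ τ, tileAverage_nonneg F Φ τ,
      sum_tileAverage hF Φ τ, fun j => (setIntegral_tileAverage_le hUm hF hD hμD hav j).trans
        (hpow n (n + 1) (by omega)), ?_⟩
    refine (approxCode_tileAverage hF hΦ τ hc0.le hN hm1).mono ?_ (le_of_eq ?_)
    · rw [div_lt_iff₀ hn] at hm
      rw [div_le_iff₀ hm0]
      linarith
    · rw [hc]
      field_simp
  obtain ⟨f, hfC, w, hwm, hwi, hlim⟩ := exists_tendsto_integral_abs_sub μ hanti hne
    (fun f hf => hf.1) (hbdd 0) (by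
      intro n f hf g hg
      have hfi := hint _ f hf
      have hgi := hint _ g hg
      obtain ⟨h1, h2, h3, h4, h5⟩ := hf
      obtain ⟨k1, k2, k3, k4, k5⟩ := hg
      refine ⟨fun j => ((h1 j).add (k1 j)).div_const 2, fun j x => ?_, fun x => ?_, fun j => ?_, ?_⟩
      · have := h2 j x
        have := k2 j x
        positivity
      · rw [← Finset.sum_div, Finset.sum_add_distrib, h3, k3]
        norm_num
      · rw [integral_div, integral_add (hfi j).integrableOn (hgi j).integrableOn]
        have := h4 j
        have := k4 j
        have := hpow n (n + 1) (by omega)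
        linarith
      · refine (h5.midpoint hfi hgi k5).mono ?_ (le_of_eq ?_)
        · have := hpow n (n + 1) (by omega)
          linarith
        · rw [pow_succ]
          ring)
  have hpow0 : Tendsto (fun n : ℕ => (2⁻¹ : ℝ) ^ n) atTop (𝓝 0) :=
    tendsto_pow_atTop_nhds_zero_of_lt_one (by norm_num) (by norm_num)
  have hsum0 : Tendsto (fun n => ∑ j, ∫ x, |f n j x - w j x| ∂μ) atTop (𝓝 0) := by
    simpa using tendsto_finsetSum Finset.univ fun j _ => hlim j
  have hdiff : ∀ n j, Integrable (fun x => |f n j x - w j x|) μ := fun n j =>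
    ((hint n _ (hfC n) j).sub (hwi j)).abs
  refine ⟨w, hwm, hwi, fun ε hε => ?_, ?_, fun j => ?_⟩
  · obtain ⟨n, h1, h2⟩ := ((hpow0.eventually_lt_const (half_pos hε)).and
      (hsum0.eventually_lt_const (half_pos hε))).exists
    exact (((hfC n).2.2.2.2).perturb (hint n _ (hfC n)) hwi h2.le).mono (by linarith) (by linarith)
  · have hi : Integrable (fun x => |∑ j, w j x - 1|) μ :=
      ((integrable_finsetSum _ fun j _ => hwi j).sub (integrable_const 1)).abs
    have h0 : ∫ x, |∑ j, w j x - 1| ∂μ ≤ 0 := by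
      refine ge_of_tendsto' hsum0 fun n => ?_
      rw [← integral_finsetSum _ fun j _ => hdiff n j]
      refine integral_mono hi (integrable_finsetSum _ fun j _ => hdiff n j) fun x => ?_
      beta_reduce
      rw [← (hfC n).2.2.1 x, abs_sub_comm, ← Finset.sum_sub_distrib]
      exact Finset.abs_sum_le_sum_abs _ _
    have h1 := (integral_eq_zero_iff_of_nonneg (fun x => abs_nonneg _) hi).1
      (le_antisymm h0 (integral_nonneg fun x => abs_nonneg _))
    filter_upwards [h1] with x hx
    exact sub_eq_zero.1 (abs_eq_zero.1 hx)
  · have h0 : ∫ x in U j, |w j x| ∂μ ≤ 0 := by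
      have hz := hpow0.add (hlim j)
      rw [add_zero] at hz
      refine ge_of_tendsto' hz fun n => ?_
      have hfi := hint n _ (hfC n) j
      calc ∫ x in U j, |w j x| ∂μ ≤ ∫ x in U j, (f n j x + |f n j x - w j x|) ∂μ := by
            refine integral_mono (hwi j).abs.integrableOn
              (hfi.add (hdiff n j)).integrableOn fun x => ?_
            beta_reduce
            have h1 := abs_sub_abs_le_abs_sub (w j x) (f n j x)
            rw [abs_of_nonneg ((hfC n).2.1 j x), abs_sub_comm] at h1
            linarith
        _ = ∫ x in U j, f n j x ∂μ + ∫ x in U j, |f n j x - w j x| ∂μ :=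
            integral_add hfi.integrableOn (hdiff n j).integrableOn
        _ ≤ 2⁻¹ ^ n + ∫ x, |f n j x - w j x| ∂μ :=
            add_le_add ((hfC n).2.2.2.1 j) (setIntegral_le_integral (hdiff n j)
              (Eventually.of_forall fun x => abs_nonneg _))
    have h1 := (integral_eq_zero_iff_of_nonneg (fun x => abs_nonneg _)
      (hwi j).abs.integrableOn).1 (le_antisymm h0 (integral_nonneg fun x => abs_nonneg _))
    filter_upwards [(ae_restrict_iff' (hUm j)).1 h1] with x hx hxU
    exact abs_eq_zero.1 (hx hxU)

end AvoidingCode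

section ZeroEntropyPartition

open Filter Topology

variable {G X : Type*} [Group G] [MulAction G X] [MeasurableSpace X] [MeasurableConstSMul G X]
  {μ : Measure X} [IsProbabilityMeasure μ] [SMulInvariantMeasure G X μ] {l : ℕ}

/-- A code for the functions `w` gives a code for a labelling `p` that is locally determined by the
values of `w` off a small set `B`. -/
lemma exists_label_code {r : ℕ} {p : X → Fin r} {w : Fin l → X → ℝ}
    (hwi : ∀ j, Integrable (w j) μ) {B : Set X} (hB : MeasurableSet B) {γ : ℝ} (hγ : 0 < γ)
    (hpw : ∀ x ∉ B, ∀ y ∉ B, (∀ j, |w j x - w j y| < 2 * γ) → p x = p y) {N : ℕ}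
    {Φ : X → Fin N} (hΦ : Measurable Φ) (τ : Fin N → G → Fin l → ℝ) {E : Finset G} {ε : ℝ}
    (herr : ∑ t ∈ E, ∑ j, ∫ x, |w j (t • x) - τ (Φ x) t j| ∂μ ≤ ε * E.card) :
    ∃ τ' : Fin N → G → Fin r,
      ∑ t ∈ E, μ.real {x | p (t • x) ≠ τ' (Φ x) t} ≤ (μ.real B + ε / γ) * E.card := by
  obtain ⟨x₀⟩ : Nonempty X := nonempty_of_isProbabilityMeasure μ
  set lab : (Fin l → ℝ) → Fin r := fun u =>
    if h : ∃ y, y ∉ B ∧ ∀ j, |w j y - u j| < γ then p h.choose else p x₀ with hlab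
  have hlabel : ∀ x ∉ B, ∀ u : Fin l → ℝ, (∀ j, |w j x - u j| < γ) → p x = lab u := by
    intro x hx u hu
    have hex : ∃ y, y ∉ B ∧ ∀ j, |w j y - u j| < γ := ⟨x, hx, hu⟩
    simp only [hlab, dif_pos hex]
    refine hpw x hx _ hex.choose_spec.1 fun j => ?_
    have h1 := hex.choose_spec.2 j
    rw [abs_sub_comm] at h1
    have h2 := abs_sub_le (w j x) (u j) (w j hex.choose)
    have h3 := hu j
    linarith
  refine ⟨fun i t => lab (τ i t), ?_⟩
  have hpt : ∀ t ∈ E, μ.real {x | p (t • x) ≠ lab (τ (Φ x) t)}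
      ≤ μ.real B + γ⁻¹ * ∑ j, ∫ x, |w j (t • x) - τ (Φ x) t j| ∂μ := by
    intro t _
    have hsub : {x | p (t • x) ≠ lab (τ (Φ x) t)} ⊆ ((fun x => t • x) ⁻¹' B) ∪
        ⋃ j, {x | γ ≤ |w j (t • x) - τ (Φ x) t j|} := by
      intro x hx
      by_contra hcon
      simp only [mem_union, mem_preimage, mem_iUnion, mem_ofPred_eq, not_or, not_exists,
        not_le] at hcon
      exact hx (hlabel _ hcon.1 _ hcon.2)
    have hBt : μ.real ((fun x => t • x) ⁻¹' B) = μ.real B :=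
      (measurePreserving_smul t μ).measureReal_preimage hB.nullMeasurableSet
    refine (measureReal_mono hsub).trans ((measureReal_union_le _ _).trans ?_)
    rw [hBt]
    gcongr
    refine (measureReal_iUnion_fintype_le _).trans ?_
    rw [Finset.mul_sum]
    refine Finset.sum_le_sum fun j _ => ?_
    have h1 := mul_meas_ge_le_integral_of_nonneg (μ := μ)
      (Eventually.of_forall fun x => abs_nonneg (w j (t • x) - τ (Φ x) t j))
      (integrable_smul_sub_code (hwi j) t hΦ fun i => τ i t j) γ
    rw [inv_mul_eq_div, le_div_iff₀ hγ]
    linarith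
  refine (Finset.sum_le_sum hpt).trans ?_
  rw [Finset.sum_add_distrib, ← Finset.mul_sum, Finset.sum_const, nsmul_eq_mul]
  have h2 := mul_le_mul_of_nonneg_left herr (inv_nonneg.2 hγ.le)
  rw [add_mul, div_eq_inv_mul]
  linarith

lemma not_invLimsup_HJoin_pos_of_approxCode (hamen : FolnerAmenable G) {r : ℕ} {p : X → Fin r}
    (hp : Measurable p) {w : Fin l → X → ℝ} (hwi : ∀ j, Integrable (w j) μ)
    (hcode : ∀ ε > 0, ApproxCode G μ w ε ε)
    (hpw : ∀ κ > 0, ∃ γ > 0, ∃ B : Set X, MeasurableSet B ∧ μ.real B ≤ κ ∧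
      ∀ x ∉ B, ∀ y ∉ B, (∀ j, |w j x - w j y| < 2 * γ) → p x = p y) :
    ¬ 0 < invLimsup (fun F : Finset G => HJoin μ (fun i => p ⁻¹' {i}) F) := by
  rw [invLimsup_pos_iff hamen (fun F => HJoin_nonneg _ F)
    (fun F => HJoin_le_log_mul_card (isMeasPartition_of_labelling hp) F)]
  rintro ⟨d, hd, h⟩
  obtain ⟨x₀⟩ : Nonempty X := nonempty_of_isProbabilityMeasure μ
  have hr : (1 : ℝ) ≤ r := by exact_mod_cast Fin.pos (p x₀)
  set β : ℝ := 1 - Real.exp (-(d / 4)) with hβ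
  have hβ1 : β < 1 := by
    have := Real.exp_pos (-(d / 4))
    linarith
  have hβ0 : 0 < β := by
    have : Real.exp (-(d / 4)) < 1 := by simpa using hd
    linarith
  have hlogβ : -Real.log (1 - β) = d / 4 := by
    rw [hβ, sub_sub_cancel, Real.log_exp, neg_neg]
  set Λ : ℝ := Real.log (r / β) with hΛ
  have hΛ0 : 0 < Λ := Real.log_pos ((one_lt_div hβ0).2 (by linarith))
  obtain ⟨γ, hγ, B, hB, hμB, hloc⟩ := hpw (d / (8 * Λ)) (by positivity)
  set ε : ℝ := min (d / 4) (γ * d / (8 * Λ)) with hε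
  have hε0 : 0 < ε := lt_min (by positivity) (by positivity)
  obtain ⟨K, δ, hδ, hE⟩ := hcode ε hε0
  obtain ⟨E, hEK, hdE⟩ := h K δ hδ
  have hEpos : (0 : ℝ) < E.card := by exact_mod_cast hEK.1.card_pos
  obtain ⟨N, Φ, τ, hΦ, hN, herr⟩ := hE E hEK
  obtain ⟨τ', hτ'⟩ := exists_label_code hwi hB hγ hloc hΦ τ herr
  have hH := HJoin_le_of_code (μ := μ) hp E hΦ τ' hβ0 hβ1
  have hN0 : (0 : ℝ) < N := by exact_mod_cast Fin.pos (Φ x₀)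
  have h1 : Real.log N ≤ d / 4 * E.card := by
    have h2 := Real.log_le_log hN0 hN
    rw [Real.log_exp] at h2
    exact h2.trans (mul_le_mul_of_nonneg_right (min_le_left _ _) hEpos.le)
  have h3 : Λ * (μ.real B + ε / γ) ≤ d / 4 := by
    have h4 : ε / γ ≤ d / (8 * Λ) := by
      rw [div_le_iff₀ hγ]
      refine (min_le_right _ _).trans (le_of_eq ?_)
      ring
    have h5 : Λ * (μ.real B + ε / γ) ≤ Λ * (d / (8 * Λ) + d / (8 * Λ)) :=
      mul_le_mul_of_nonneg_left (add_le_add hμB h4) hΛ0.le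
    have h6 : Λ * (d / (8 * Λ) + d / (8 * Λ)) = d / 4 := by
      field_simp
      norm_num
    linarith
  have h7 := mul_le_mul_of_nonneg_left hτ' hΛ0.le
  have h8 := mul_le_mul_of_nonneg_right h3 hEpos.le
  rw [hlogβ] at hH
  nlinarith [mul_pos hd hEpos]

/-- A pairwise disjoint tuple of measurable sets of zero upper independence density admits a
partition of zero entropy refining the cover by the complements. -/
lemma exists_partition_not_invLimsup_HJoin_pos (hamen : FolnerAmenable G) (hl : 2 ≤ l)
    {U : Fin l → Set X} (hUm : ∀ j, MeasurableSet (U j))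
    (hUd : Pairwise fun i j => Disjoint (U i) (U j)) (hU : ¬ 0 < upperIndepDens G μ U) :
    ∃ P : Fin l → Set X, IsMeasPartition P ∧ (∀ a, ∃ j, P a ⊆ (U j)ᶜ) ∧
      ¬ 0 < invLimsup (fun F : Finset G => HJoin μ P F) := by
  obtain ⟨w, hwm, hwi, hcode, hsum, hzero⟩ :=
    exists_partitionOfUnity_approxCode hamen hl hUm hUd hU
  have hl0 : (0 : ℝ) < l := by exact_mod_cast (by omega : 0 < l)
  obtain ⟨a, ha, ha0, ha1⟩ := ((countable_iUnion fun j =>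
    Measure.countable_meas_level_set_pos (μ := μ) (hwm j)).dense_compl ℝ).exists_between
      (by positivity : (0 : ℝ) < (l : ℝ)⁻¹)
  have hlevel : ∀ j, μ {x | w j x = a} = 0 := by
    intro j
    by_contra h
    exact ha (mem_iUnion.2 ⟨j, pos_iff_ne_zero.2 h⟩)
  set Q : Set X := {x | ∑ j, w j x = 1} ∩ ⋂ j, ((U j)ᶜ ∪ {x | w j x = 0}) with hQ
  have hQm : MeasurableSet Q :=
    (measurableSet_eq_fun (Finset.measurable_fun_sum _ fun j _ => hwm j) measurable_const).inter
      (MeasurableSet.iInter fun j =>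
        (hUm j).compl.union (measurableSet_eq_fun (hwm j) measurable_const))
  have hQae : ∀ᵐ x ∂μ, x ∈ Q := by
    filter_upwards [hsum, ae_all_iff.2 hzero] with x h1 h2
    refine ⟨h1, mem_iInter.2 fun j => ?_⟩
    by_cases hx : x ∈ U j
    · exact Or.inr (h2 j hx)
    · exact Or.inl hx
  set A : Fin l → Set X := fun j => (Q ∩ {x | a < w j x}) ∪ (Qᶜ ∩ (U j)ᶜ) with hA
  have hAm : ∀ j, MeasurableSet (A j) := fun j =>
    (hQm.inter (measurableSet_lt measurable_const (hwm j))).union (hQm.compl.inter (hUm j).compl)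
  have hAU : ∀ j, A j ⊆ (U j)ᶜ := by
    rintro j x (⟨hx, hax⟩ | ⟨-, hx⟩) hxU
    · rcases mem_iInter.1 hx.2 j with h | h
      · exact h hxU
      · rw [mem_ofPred_eq] at hax h
        linarith
    · exact hx hxU
  have hAex : ∀ x, ∃ j, x ∈ A j := by
    intro x
    by_cases hx : x ∈ Q
    · by_contra hcon
      push Not at hcon
      have h1 : ∀ j, w j x ≤ a := fun j => not_lt.1 fun h => hcon j (Or.inl ⟨hx, h⟩)
      have h2 : ∑ j, w j x = 1 := hx.1
      have h3 := Finset.sum_le_sum fun j (_ : j ∈ Finset.univ) => h1 j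
      simp only [Finset.sum_const, Finset.card_univ, Fintype.card_fin, nsmul_eq_mul] at h3
      have h4 := mul_lt_mul_of_pos_left ha1 hl0
      rw [mul_inv_cancel₀ hl0.ne'] at h4
      linarith
    · by_cases hx0 : x ∈ U ⟨0, by omega⟩
      · refine ⟨⟨1, by omega⟩, Or.inr ⟨hx, fun hx1 => ?_⟩⟩
        exact Set.disjoint_left.1 (hUd (by simp)) hx0 hx1
      · exact ⟨_, Or.inr ⟨hx, hx0⟩⟩
  obtain ⟨p, hp, hsel, hdet⟩ := exists_measurable_selection (by omega) hAm
  refine ⟨fun i => p ⁻¹' {i}, isMeasPartition_of_labelling hp, fun i => ⟨i, ?_⟩,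
    not_invLimsup_HJoin_pos_of_approxCode hamen hp hwi hcode fun κ hκ => ?_⟩
  · rintro x rfl
    obtain ⟨j, hj⟩ := hAex x
    exact hAU _ (hsel x j hj)
  · set B : ℕ → Set X := fun n => Qᶜ ∪ ⋃ j, {x | |w j x - a| ≤ 1 / ((n : ℝ) + 1)} with hB
    have hBm : ∀ n, MeasurableSet (B n) := fun n => hQm.compl.union (MeasurableSet.iUnion fun j =>
      measurableSet_le ((hwm j).sub_const a).abs measurable_const)
    have hBanti : Antitone B := by
      intro n m hnm
      refine union_subset_union_right _ (iUnion_mono fun j x hx => ?_)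
      rw [mem_ofPred_eq] at hx ⊢
      exact hx.trans (Nat.one_div_le_one_div hnm)
    have hBinter : μ (⋂ n, B n) = 0 := by
      refine measure_mono_null (t := Qᶜ ∪ ⋃ j, {x | w j x = a}) (fun x hx => ?_)
        (measure_union_null hQae (measure_iUnion_null hlevel))
      by_contra hcon
      simp only [mem_union, mem_compl_iff, not_or, not_not, mem_iUnion, not_exists,
        mem_ofPred_eq] at hcon
      have hpos : ∀ j, 0 < |w j x - a| := fun j => abs_pos.2 (sub_ne_zero.2 (hcon.2 j))
      have hsmall : ∀ᶠ n : ℕ in atTop, ∀ j, 1 / ((n : ℝ) + 1) < |w j x - a| :=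
        eventually_all.2 fun j =>
          tendsto_one_div_add_atTop_nhds_zero_nat.eventually_lt_const (hpos j)
      obtain ⟨n, hn⟩ := hsmall.exists
      rcases mem_iInter.1 hx n with h | h
      · exact h hcon.1
      · obtain ⟨j, hj⟩ := mem_iUnion.1 h
        exact absurd hj (not_le.2 (hn j))
    have hlim := tendsto_measure_iInter_atTop (μ := μ) (fun n => (hBm n).nullMeasurableSet) hBanti
      ⟨0, measure_ne_top _ _⟩
    rw [hBinter] at hlim
    obtain ⟨n, hn⟩ := (hlim.eventually_lt_const (ENNReal.ofReal_pos.2 hκ)).exists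
    refine ⟨1 / ((n : ℝ) + 1), by positivity, B n, hBm n,
      ENNReal.toReal_le_of_le_ofReal hκ.le hn.le, fun x hx y hy hxy => hdet x y fun j => ?_⟩
    simp only [hB, mem_union, mem_compl_iff, not_or, not_not, mem_iUnion, not_exists,
      mem_ofPred_eq, not_le] at hx hy
    have h1 := hx.2 j
    have h2 := hy.2 j
    have h3 := hxy j
    have h4 : a < w j x ↔ a < w j y := by
      rw [abs_lt] at h3
      rw [lt_abs] at h1 h2
      constructor <;> intro h <;> rcases h1 with h1 | h1 <;> rcases h2 with h2 | h2 <;> linarith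
    simp [hA, hx.1, hy.1, h4]

end ZeroEntropyPartition

/-- Theorem: for `k ≥ 2`, a nondiagonal tuple is a `μ`-IE-tuple if and only if it is a
`μ`-entropy tuple. -/
theorem stmt11 {G X : Type*} [Group G] [TopologicalSpace X] [CompactSpace X] [T2Space X]
    [MulAction G X] [ContinuousConstSMul G X] [MeasurableSpace X] [BorelSpace X]
    (hamen : FolnerAmenable G)
    (μ : Measure X) [IsProbabilityMeasure μ] (hinv : InvariantMeasure G μ)
    (k : ℕ) (hk : 2 ≤ k) (x : Fin k → X) (hnd : ∃ i j, x i ≠ x j) :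
    IsMuIETuple G μ x ↔ MuEntropyTupleProp G μ x := by
  have : SMulInvariantMeasure G X μ := ⟨fun s B hB => hinv s B hB⟩
  have htwo : ∀ (l : ℕ) (z : Fin l → X), range z = range x → 2 ≤ l := by
    intro l z hz
    by_contra hlt
    obtain ⟨i, j, hij⟩ := hnd
    obtain ⟨a, ha⟩ := hz.symm ▸ mem_range_self (f := x) i
    obtain ⟨b, hb⟩ := hz.symm ▸ mem_range_self (f := x) j
    have hab : a = b := Fin.ext (by omega)
    exact hij (ha.symm.trans (hab ▸ hb))
  constructor
  · intro hIE l z U hzinj hz hUn hUm hUd r P hP hPU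
    have hsurj : ∀ j, ∃ i, x i = z j := fun j => mem_range.1 (hz ▸ mem_range_self j)
    have hback : ∀ i, ∃ j, z j = x i := fun i => mem_range.1 (hz.symm ▸ mem_range_self i)
    choose g hg using hsurj
    choose jj hjj using hback
    have h1 : 0 < upperIndepDens G μ (fun i => U (jj i)) :=
      hIE _ fun i => by
        rw [← hjj i]
        exact hUn _
    have h2 : 0 < upperIndepDens G μ U :=
      upperIndepDens_pos_of_subset_comp hamen g (fun j => by
        have h3 : jj (g j) = j := hzinj ((hjj _).trans (hg j))
        simp only [h3, subset_refl]) h1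
    exact invLimsup_HJoin_pos_of_upperIndepDens_pos hamen (htwo l z hz) h2 hP hPU
  · intro hE V hV
    obtain ⟨e⟩ : Nonempty (Fin (Nat.card (range x)) ≃ range x) := ⟨(Finite.equivFin _).symm⟩
    set l : ℕ := Nat.card (range x)
    set z : Fin l → X := fun j => e j with hz
    have hzinj : Function.Injective z := Subtype.val_injective.comp e.injective
    have hzr : range z = range x := by
      rw [hz, range_comp' Subtype.val e, e.surjective.range_eq, image_univ, Subtype.range_coe]
    set jj : Fin k → Fin l := fun i => e.symm ⟨x i, mem_range_self i⟩ with hjj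
    have hzjj : ∀ i, z (jj i) = x i := fun i => by simp [hz, hjj]
    obtain ⟨W, hW, hWd⟩ := (finite_range z).t2_separation
    have hWo : ∀ y, IsOpen (W y) := fun y => (hW y).2
    set U : Fin l → Set X := fun j => W (z j) ∩ ⋂ i, ⋂ (_ : jj i = j), interior (V i) with hU
    have hUo : ∀ j, IsOpen (U j) := fun j =>
      (hWo _).inter (isOpen_iInter_of_finite fun i => isOpen_iInter_of_finite fun _ =>
        isOpen_interior)
    have hzU : ∀ j, z j ∈ U j := by
      intro j
      refine ⟨(hW _).1, mem_iInter₂.2 fun i hi => ?_⟩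
      rw [← hi, hzjj]
      exact mem_interior_iff_mem_nhds.2 (hV i)
    have hUd : Pairwise fun i j => Disjoint (U i) (U j) := fun i j hij =>
      (hWd (mem_range_self i) (mem_range_self j) (hzinj.ne hij)).mono inter_subset_left
        inter_subset_left
    refine upperIndepDens_pos_of_subset_comp hamen (A := U) jj (fun i y hy => ?_) ?_
    · exact interior_subset (mem_iInter₂.1 hy.2 i rfl)
    · by_contra hcon
      obtain ⟨P, hP, hPU, hPzero⟩ := exists_partition_not_invLimsup_HJoin_pos hamen
        (htwo l z hzr) (fun j => (hUo j).measurableSet) hUd hcon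
      exact hPzero (hE l z U hzinj hzr (fun j => (hUo j).mem_nhds (hzU j))
        (fun j => (hUo j).measurableSet) hUd l P hP hPU)
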